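/- arXiv:cs/0701113 — 4 statements merged into one kernel-verified Lean document; each statement's English description precedes it below -/
import Mathlib

section
/- For every finite linear ordering α, every finite semigroup (S,·), and every additive labelling σ from α to S, there exists a ramseyan split for (α,σ) of height at most |S|. -/
/-- An additive labelling from a linear ordering to a semigroup. -/
def IsAdditive {α S : Type*} [LinearOrder α] [Semigroup S] (σ : α → α → S) : Prop :=
  ∀ x y z : α, x < y → y < z → σ x y * σ y z = σ x z

/-- `x` and `y` are `k`-neighbours for the split `s`. -/
def KNeighbours {α : Type*} [LinearOrder α] (s : α → ℕ) (k : ℕ) (x y : α) : Prop :=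
  s x = k ∧ s y = k ∧ ∀ z, min x y ≤ z → z ≤ max x y → k ≤ s z

/-- A split `s` is ramseyan for the additive labelling `σ`. -/
def IsRamseyanSplit {α S : Type*} [LinearOrder α] [Semigroup S]
    (σ : α → α → S) (s : α → ℕ) : Prop :=
  ∀ k : ℕ, ∀ x y x' y' : α, x < y → x' < y' →
    (∀ a ∈ ({x, y, x', y'} : Set α), ∀ b ∈ ({x, y, x', y'} : Set α), KNeighbours s k a b) →
    σ x y = σ x' y' ∧ σ x y * σ x y = σ x y

namespace FactSplit

/-- The J-preorder of a monoid. -/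
def Jle {M : Type*} [Monoid M] (a b : M) : Prop := ∃ p q : M, a = p * b * q

/-- The right ideal generated by an element. -/
def ra {M : Type*} [Monoid M] (a : M) : Set M := Set.range (fun u => a * u)

section Monoids
variable {M : Type*} [Monoid M]

theorem Jle.refl (a : M) : Jle a a := ⟨1, 1, by simp⟩

theorem Jle.trans {a b c : M} (h : Jle a b) (h' : Jle b c) : Jle a c := by
  obtain ⟨p, q, rfl⟩ := h
  obtain ⟨p', q', rfl⟩ := h'
  exact ⟨p * p', q' * q, by simp only [mul_assoc]⟩

theorem jle_mul_right (a b : M) : Jle (a * b) a := ⟨1, b, by simp⟩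
theorem jle_mul_left (a b : M) : Jle (a * b) b := ⟨a, 1, by simp⟩

theorem iter {a p t : M} (h : a = p * a * t) (m : ℕ) : a = p ^ m * a * t ^ m := by
  induction m with
  | zero => simp
  | succ m ih =>
    calc a = p ^ m * a * t ^ m := ih
      _ = p ^ m * (p * a * t) * t ^ m := by rw [← h]
      _ = _ := by rw [pow_succ, pow_succ']; simp only [mul_assoc]

theorem stab_right [Finite M] {a b : M} (h : Jle a (a * b)) : ∃ v, a = a * b * v := by
  obtain ⟨p, q, hpq⟩ := h
  have h1 : a = p * a * (b * q) := by simpa only [mul_assoc] using hpq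
  obtain ⟨m, n, hmn, he⟩ : ∃ m n : ℕ, m < n ∧ (b * q) ^ m = (b * q) ^ n := by
    obtain ⟨m, n, hne, he⟩ := Finite.exists_ne_map_eq_of_infinite (fun n : ℕ => (b * q) ^ n)
    rcases lt_or_gt_of_ne hne with h | h
    · exact ⟨m, n, h, he⟩
    · exact ⟨n, m, h, he.symm⟩
  obtain ⟨k, rfl⟩ := Nat.exists_eq_add_of_lt hmn
  have h2 : a = a * (b * q) ^ (k + 1) := by
    calc a = p ^ m * a * (b * q) ^ m := iter h1 m
      _ = p ^ m * a * (b * q) ^ (m + (k + 1)) := by rw [he]; rfl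
      _ = (p ^ m * a * (b * q) ^ m) * (b * q) ^ (k + 1) := by rw [pow_add]; simp only [mul_assoc]
      _ = _ := by rw [← iter h1 m]
  refine ⟨q * (b * q) ^ k, ?_⟩
  rw [pow_succ'] at h2
  simpa only [mul_assoc] using h2

theorem stab_left [Finite M] {a b : M} (h : Jle a (b * a)) : ∃ v, a = v * (b * a) := by
  obtain ⟨p, q, hpq⟩ := h
  have h1 : a = (p * b) * a * q := by simpa only [mul_assoc] using hpq
  obtain ⟨m, n, hmn, he⟩ : ∃ m n : ℕ, m < n ∧ (p * b) ^ m = (p * b) ^ n := by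
    obtain ⟨m, n, hne, he⟩ := Finite.exists_ne_map_eq_of_infinite (fun n : ℕ => (p * b) ^ n)
    rcases lt_or_gt_of_ne hne with h | h
    · exact ⟨m, n, h, he⟩
    · exact ⟨n, m, h, he.symm⟩
  obtain ⟨k, rfl⟩ := Nat.exists_eq_add_of_lt hmn
  have h2 : a = (p * b) ^ (k + 1) * a := by
    calc a = (p * b) ^ m * a * q ^ m := iter h1 m
      _ = (p * b) ^ ((k + 1) + m) * a * q ^ m := by
          rw [he]; congr 3; omega
      _ = (p * b) ^ (k + 1) * ((p * b) ^ m * a * q ^ m) := by rw [pow_add]; simp only [mul_assoc]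
      _ = _ := by rw [← iter h1 m]
  refine ⟨(p * b) ^ k * p, ?_⟩
  rw [pow_succ] at h2
  simpa only [mul_assoc] using h2

theorem mem_ra (a : M) : a ∈ ra a := ⟨1, by simp⟩

theorem ra_mul [Finite M] {a b : M} (h : Jle a (a * b)) : ra (a * b) = ra a := by
  obtain ⟨v, hv⟩ := stab_right h
  ext z
  constructor
  · rintro ⟨u, rfl⟩
    exact ⟨b * u, by simp [mul_assoc]⟩
  · rintro ⟨u, rfl⟩
    refine ⟨v * u, ?_⟩
    show a * b * (v * u) = a * u
    rw [← mul_assoc, ← hv]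

theorem ra_left (p a : M) : ra (p * a) = (fun z => p * z) '' ra a := by
  ext z
  simp [ra, mul_assoc]

theorem jle_of_ra {a b : M} (h : ra a = ra b) : Jle a b := by
  have : a ∈ ra b := h ▸ mem_ra a
  obtain ⟨u, rfl⟩ := this
  exact jle_mul_right _ _

theorem green_aux [Finite M] (A B : Set M) :
    ∃ p : M, ∀ a d : M, ra a = A → ra d = B → Jle a d → Jle d a →
      ra (p * a) = B ∧ ∀ a', ra a' = A → p * a = p * a' → a = a' := by
  by_cases h : ∃ a d : M, ra a = A ∧ ra d = B ∧ Jle a d ∧ Jle d a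
  · obtain ⟨a, d, rfl, rfl, had, p, q, hd⟩ := h
    refine ⟨p, fun a' d' ha' hd' _ _ => ⟨?_, ?_⟩⟩
    · rw [ra_left, ha', ← ra_left, hd]
      refine (ra_mul ?_).symm
      rw [← hd]
      exact (jle_mul_left _ _).trans had
    · intro a'' ha'' he
      have h1 : Jle a (p * a) := by
        refine had.trans ?_
        rw [hd]; exact jle_mul_right _ _
      obtain ⟨v, hv⟩ := stab_left h1
      have key : ∀ z, ra z = ra a → v * (p * z) = z := by
        intro z hz
        have : z ∈ ra a := hz ▸ mem_ra z
        obtain ⟨u, rfl⟩ := this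
        show v * (p * (a * u)) = a * u
        conv_rhs => rw [hv]
        simp only [mul_assoc]
      rw [← key a' ha', ← key a'' ha'', he]
  · exact ⟨1, fun a d h1 h2 h3 h4 => absurd ⟨a, d, h1, h2, h3, h4⟩ h⟩

theorem green [Finite M] : ∃ g : M → M → M, ∀ a d : M, Jle a d → Jle d a →
    ra (g d a) = ra d ∧ ∀ a' d', ra a' = ra a → ra d' = ra d → g d a = g d' a' → a = a' := by
  choose P hP using green_aux (M := M)
  refine ⟨fun d a => P (ra a) (ra d) * a, fun a d h1 h2 => ⟨?_, ?_⟩⟩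
  · exact (hP _ _ a d rfl rfl h1 h2).1
  · intro a' d' ha hd he
    refine (hP _ _ a d rfl rfl h1 h2).2 a' ha ?_
    simpa [ha, hd] using he

theorem exists_min [Finite M] (U : Finset M) (hU : U.Nonempty) :
    ∃ a ∈ U, ∀ b ∈ U, Jle b a → Jle a b := by
  obtain ⟨a, ha, hmin⟩ := U.exists_min_image (fun b => Set.ncard {x | Jle x b}) hU
  refine ⟨a, ha, fun b hb hba => ?_⟩
  have hsub : {x | Jle x b} ⊆ {x | Jle x a} := fun x hx => Jle.trans hx hba
  have := Set.eq_of_subset_of_ncard_le hsub (hmin b hb) (Set.toFinite _)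
  have h2 : a ∈ {x | Jle x b} := by rw [this]; exact Jle.refl a
  exact h2

end Monoids

/-- No cut point in the closed interval. -/
def Conn {α : Type*} [LinearOrder α] (C : Set α) (x y : α) : Prop :=
  ∀ z, x ≤ z → z ≤ y → z ∉ C

theorem greedy {α : Type*} [LinearOrder α] [Finite α] (Q : α → Prop) (R : α → α → Prop) :
    ∃ Y : Set α, ∀ z, z ∈ Y ↔ Q z ∧ ∀ y ∈ Y, y < z → R y z := by
  have wf : WellFounded ((· < ·) : α → α → Prop) := wellFounded_lt
  let F : ∀ z : α, (∀ y, y < z → Prop) → Prop := fun z f => Q z ∧ ∀ y (h : y < z), f y h → R y z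
  refine ⟨{z | wf.fix F z}, fun z => ?_⟩
  show wf.fix F z ↔ _
  rw [wf.fix_eq]
  constructor
  · rintro ⟨h1, h2⟩
    exact ⟨h1, fun y hy hyz => h2 y hyz hy⟩
  · rintro ⟨h1, h2⟩
    exact ⟨h1, fun y hyz hy => h2 y hy hyz⟩

theorem exists_index {M : Type*} (J : Finset M) :
    ∃ e : M → ℕ, (∀ a ∈ J, 1 ≤ e a ∧ e a ≤ J.card) ∧ ∀ a ∈ J, ∀ b ∈ J, e a = e b → a = b := by
  classical
  refine ⟨fun a => if h : a ∈ J then (J.equivFin ⟨a, h⟩ : ℕ) + 1 else 0, ?_, ?_⟩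
  · intro a ha
    have := (J.equivFin ⟨a, ha⟩).2
    simp only [ha, dif_pos]
    omega
  · intro a ha b hb h
    simp only [ha, hb, dif_pos] at h
    have h2 : J.equivFin ⟨a, ha⟩ = J.equivFin ⟨b, hb⟩ := Fin.ext (by omega)
    simpa using J.equivFin.injective h2

theorem main {α M : Type*} [LinearOrder α] [Finite α] [Monoid M] [Finite M]
    (σ : α → α → M) (hσ : IsAdditive σ) (U : Finset M) :
    (∀ a ∈ U, ∀ b, Jle a b → Jle b a → b ∈ U) →
    ∀ (C : Set α) (τ : α → M), (∀ x, x ∉ C → τ x ∈ U) →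
      (∀ x y, x < y → Conn C x y → σ x y ∈ U) →
      (∀ x y, x < y → Conn C x y → τ x * σ x y = τ y) →
      ∃ s : α → ℕ, (∀ x, x ∉ C → 1 ≤ s x ∧ s x ≤ U.card) ∧
        ∀ k l h, (∀ z, l ≤ z → z ≤ h → z ∉ C ∧ k ≤ s z) →
          ∀ x y x' y', l ≤ x → x < y → y ≤ h → l ≤ x' → x' < y' → y' ≤ h →
            s x = k → s y = k → s x' = k → s y' = k →
            σ x y = σ x' y' ∧ σ x y * σ x y = σ x y := by
  classical
  induction U using Finset.strongInduction with
  | H U ih =>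
  intro hU C τ hτ hσU hτσ
  rcases U.eq_empty_or_nonempty with rfl | hne
  · have hC : ∀ x, x ∈ C := fun x => by_contra fun hx => by simpa using hτ x hx
    refine ⟨fun _ => 0, fun x hx => absurd (hC x) hx, ?_⟩
    intro k l h hz x y x' y' h1 h2 h3
    exact absurd (hC x) (hz x h1 (h2.le.trans h3)).1
  obtain ⟨a, haU, hmin⟩ := exists_min U hne
  set J := U.filter (fun b => Jle b a) with hJ
  have memJ : ∀ b, b ∈ J ↔ b ∈ U ∧ Jle b a := by simp [hJ]
  have haJ : a ∈ J := (memJ a).2 ⟨haU, Jle.refl a⟩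
  have Jmin : ∀ b ∈ J, ∀ c ∈ U, Jle c b → c ∈ J := fun b hb c hc h =>
    (memJ c).2 ⟨hc, h.trans ((memJ b).1 hb).2⟩
  have JJ : ∀ b ∈ J, ∀ c ∈ J, Jle b c := fun b hb c hc =>
    ((memJ b).1 hb).2.trans (hmin c ((memJ c).1 hc).1 ((memJ c).1 hc).2)
  have Jclosed : ∀ b ∈ J, ∀ c, Jle b c → Jle c b → c ∈ J := fun b hb c h1 h2 =>
    Jmin b hb c (hU b ((memJ b).1 hb).1 c h1 h2) h2
  obtain ⟨Y, hY⟩ := greedy (fun z => z ∉ C ∧ τ z ∈ J) (fun y z => Conn C y z → σ y z ∈ J)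
  have YC : ∀ y ∈ Y, y ∉ C := fun y hy => ((hY y).1 hy).1.1
  have Yτ : ∀ y ∈ Y, τ y ∈ J := fun y hy => ((hY y).1 hy).1.2
  have Yσ : ∀ y ∈ Y, ∀ z ∈ Y, y < z → Conn C y z → σ y z ∈ J := fun y hy z hz hyz hc =>
    ((hY z).1 hz).2 y hy hyz hc
  -- the new base labelling
  have exm : ∀ z, ∃ t : M, (∀ m ∈ Y, m < z → Conn C m z → (∀ y ∈ Y, y < z → y ≤ m) → t = σ m z) ∧
      ((∀ m ∈ Y, m < z → ¬ Conn C m z) → t = τ z) := by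
    intro z
    by_cases h : ∃ m ∈ Y, m < z ∧ Conn C m z ∧ ∀ y ∈ Y, y < z → y ≤ m
    · obtain ⟨m, hm, hmz, hc, hmax⟩ := h
      refine ⟨σ m z, ?_, fun h => absurd hc (h m hm hmz)⟩
      intro m' hm' hmz' _ hmax'
      rw [le_antisymm (hmax m' hm' hmz') (hmax' m hm hmz)]
    · refine ⟨τ z, ?_, fun _ => rfl⟩
      intro m hm hmz hc hmax
      exact absurd ⟨m, hm, hmz, hc, hmax⟩ h
  choose τ' hτ'1 hτ'2 using exm
  -- dichotomy
  have dich : ∀ z, (∃ m ∈ Y, m < z ∧ Conn C m z ∧ ∀ y ∈ Y, y < z → y ≤ m) ∨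
      (∀ m ∈ Y, m < z → ¬ Conn C m z) := by
    intro z
    by_cases h : ∃ m ∈ Y, m < z ∧ Conn C m z
    · left
      obtain ⟨m0, h0, h1, h2⟩ := h
      obtain ⟨m, hm, hmax⟩ := Set.exists_max_image {y | y ∈ Y ∧ y < z} id (Set.toFinite _) ⟨m0, h0, h1⟩
      have hm0 : m0 ≤ m := hmax m0 ⟨h0, h1⟩
      exact ⟨m, hm.1, hm.2, fun w hw hwz => h2 w (hm0.trans hw) hwz, fun y hy hyz => hmax y ⟨hy, hyz⟩⟩
    · right
      intro m hm hmz hc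
      exact h ⟨m, hm, hmz, hc⟩
  have hcard : (U \ J).card + J.card = U.card :=
    Finset.card_sdiff_add_card_eq_card (Finset.filter_subset _ _)
  obtain ⟨s', hs'1, hs'2⟩ := ih (U \ J)
    ⟨Finset.sdiff_subset, fun h => (Finset.mem_sdiff.1 (h haU)).2 haJ⟩
    (by
      intro b hb c h1 h2
      rw [Finset.mem_sdiff] at hb ⊢
      refine ⟨hU b hb.1 c h1 h2, fun hc => hb.2 (Jmin c hc b hb.1 h1)⟩)
    (C ∪ Y) τ'
    (by
      intro z hz
      have hzC : z ∉ C := fun h => hz (Or.inl h)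
      have hzY : z ∉ Y := fun h => hz (Or.inr h)
      rw [Finset.mem_sdiff]
      rcases dich z with ⟨m, hm, hmz, hc, hmax⟩ | hno
      · rw [hτ'1 z m hm hmz hc hmax]
        refine ⟨hσU m z hmz hc, fun hJm => hzY ((hY z).2 ⟨⟨hzC, ?_⟩, ?_⟩)⟩
        · refine Jmin _ hJm _ (hτ z hzC) ?_
          rw [← hτσ m z hmz hc]; exact jle_mul_left _ _
        · intro y hy hyz hcy
          rcases (hmax y hy hyz).eq_or_lt with rfl | hlt
          · exact hJm
          · refine Jmin _ hJm _ (hσU y z hyz hcy) ?_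
            rw [← hσ y m z hlt hmz]; exact jle_mul_left _ _
      · rw [hτ'2 z hno]
        exact ⟨hτ z hzC, fun hJm => hzY ((hY z).2 ⟨⟨hzC, hJm⟩,
          fun y hy hyz hcy => absurd hcy (hno y hy hyz)⟩)⟩)
    (by
      intro x z hxz hc
      have hcC : Conn C x z := fun w h1 h2 h3 => hc w h1 h2 (Or.inl h3)
      have hxY : x ∉ Y := fun h => hc x le_rfl hxz.le (Or.inr h)
      have hxC : x ∉ C := hcC x le_rfl hxz.le
      have hzY : z ∉ Y := fun h => hc z hxz.le le_rfl (Or.inr h)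
      rw [Finset.mem_sdiff]
      refine ⟨hσU x z hxz hcC, fun hJm => hzY ((hY z).2 ⟨⟨hcC z hxz.le le_rfl, ?_⟩, ?_⟩)⟩
      · refine Jmin _ hJm _ (hτ z (hcC z hxz.le le_rfl)) ?_
        rw [← hτσ x z hxz hcC]; exact jle_mul_left _ _
      · intro y hy hyz hcy
        have hyx : y < x := by
          by_contra hn
          exact hc y (not_lt.1 hn) hyz.le (Or.inr hy)
        refine Jmin _ hJm _ (hσU y z hyz hcy) ?_
        rw [← hσ y x z hyx hxz]; exact jle_mul_left _ _)
    (by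
      intro x z hxz hc
      have hcC : Conn C x z := fun w h1 h2 h3 => hc w h1 h2 (Or.inl h3)
      have before : ∀ y ∈ Y, y < z → y < x := by
        intro y hy hyz
        by_contra hn
        exact hc y (not_lt.1 hn) hyz.le (Or.inr hy)
      rcases dich x with ⟨m, hm, hmx, hcm, hmax⟩ | hno
      · rw [hτ'1 x m hm hmx hcm hmax, hτ'1 z m hm (hmx.trans hxz) ?_ ?_]
        · exact hσ m x z hmx hxz
        · intro w h1 h2
          rcases le_total w x with h | h
          · exact hcm w h1 h
          · exact hcC w h h2
        · intro y hy hyz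
          exact hmax y hy (before y hy hyz)
      · rw [hτ'2 x hno, hτ'2 z ?_]
        · exact hτσ x z hxz hcC
        · intro m hm hmz hcm
          exact hno m hm (before m hm hmz) (fun w h1 h2 => hcm w h1 (h2.trans hxz.le)))
  -- the colouring of Y
  obtain ⟨g, hg⟩ := green (M := M)
  obtain ⟨e, he1, he2⟩ := exists_index J
  have exd : ∀ x, ∃ d : M, x ∈ Y → d ∈ J ∧ ∀ y ∈ Y, x < y → Conn C x y → ra (σ x y) = ra d := by
    intro x
    by_cases hx : x ∈ Y
    · have cmp : ∀ y ∈ Y, x < y → Conn C x y → ∀ y' ∈ Y, x < y' → Conn C x y' → y < y' →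
          ra (σ x y) = ra (σ x y') := by
        intro y hy hxy hc y' hy' hxy' hc' hlt
        rw [← hσ x y y' hxy hlt]
        refine (ra_mul ?_).symm
        rw [hσ x y y' hxy hlt]
        exact JJ _ (Yσ x hx y hy hxy hc) _ (Yσ x hx y' hy' hxy' hc')
      by_cases h : ∃ y ∈ Y, x < y ∧ Conn C x y
      · obtain ⟨y, hy, hxy, hc⟩ := h
        refine ⟨σ x y, fun _ => ⟨Yσ x hx y hy hxy hc, ?_⟩⟩
        intro y' hy' hxy' hc'
        rcases lt_trichotomy y y' with hlt | rfl | hlt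
        · exact (cmp y hy hxy hc y' hy' hxy' hc' hlt).symm
        · rfl
        · exact cmp y' hy' hxy' hc' y hy hxy hc hlt
      · exact ⟨a, fun _ => ⟨haJ, fun y hy hxy hc => absurd ⟨y, hy, hxy, hc⟩ h⟩⟩
    · exact ⟨a, fun h => absurd h hx⟩
  choose d hd using exd
  have fJ : ∀ y ∈ Y, g (d y) (τ y) ∈ J := by
    intro y hy
    have h1 := (hg (τ y) (d y) (JJ _ (Yτ y hy) _ (hd y hy).1) (JJ _ (hd y hy).1 _ (Yτ y hy))).1
    exact Jclosed _ (hd y hy).1 _ (jle_of_ra h1.symm) (jle_of_ra h1)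
  have claim : ∀ x ∈ Y, ∀ y ∈ Y, x < y → Conn C x y → g (d x) (τ x) = g (d y) (τ y) →
      τ x = τ y ∧ ra (d x) = ra (d y) := by
    intro x hx y hy hxy hc he
    have hgx := hg (τ x) (d x) (JJ _ (Yτ x hx) _ (hd x hx).1) (JJ _ (hd x hx).1 _ (Yτ x hx))
    have hgy := hg (τ y) (d y) (JJ _ (Yτ y hy) _ (hd y hy).1) (JJ _ (hd y hy).1 _ (Yτ y hy))
    have hr : ra (d x) = ra (d y) := by rw [← hgx.1, ← hgy.1, he]
    refine ⟨hgx.2 _ _ ?_ hr.symm he, hr⟩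
    rw [← hτσ x y hxy hc]
    refine ra_mul ?_
    rw [hτσ x y hxy hc]
    exact JJ _ (Yτ x hx) _ (Yτ y hy)
  let s : α → ℕ := fun x => if x ∈ Y then e (g (d x) (τ x)) else J.card + s' x
  have sY : ∀ x, x ∈ Y → s x = e (g (d x) (τ x)) := fun x hx => if_pos hx
  have sN : ∀ x, x ∉ Y → s x = J.card + s' x := fun x hx => if_neg hx
  have sYle : ∀ x, x ∈ Y → 1 ≤ s x ∧ s x ≤ J.card := fun x hx => by
    rw [sY x hx]; exact he1 _ (fJ x hx)
  have sNgt : ∀ x, x ∉ C → x ∉ Y → J.card < s x ∧ s x ≤ U.card := fun x hx hx' => by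
    rw [sN x hx']
    have := hs'1 x (by rintro (h | h); exacts [hx h, hx' h])
    omega
  refine ⟨s, ?_, ?_⟩
  · intro x hx
    by_cases hxY : x ∈ Y
    · have := sYle x hxY
      omega
    · have := sNgt x hx hxY
      omega
  intro k l h hz x y x' y' hlx hxy hyh hlx' hxy' hyh' sx sy sx' sy'
  have conn : ∀ u v, l ≤ u → v ≤ h → Conn C u v := fun u v hu hv w h1 h2 =>
    (hz w (hu.trans h1) (h2.trans hv)).1
  have inC : ∀ u, l ≤ u → u ≤ h → u ∉ C := fun u h1 h2 => (hz u h1 h2).1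
  by_cases hk : k ≤ J.card
  · have inY : ∀ u, l ≤ u → u ≤ h → s u = k → u ∈ Y := by
      intro u h1 h2 h3
      by_contra hn
      have := sNgt u (inC u h1 h2) hn
      omega
    have key : ∀ u v, l ≤ u → u < v → v ≤ h → s u = k → s v = k →
        τ u = τ v ∧ ra (d u) = ra (d v) := by
      intro u v hu huv hv su sv
      have huY := inY u hu (huv.le.trans hv) su
      have hvY := inY v (hu.trans huv.le) hv sv
      refine claim u huY v hvY huv (conn u v hu hv) ?_
      apply he2 _ (fJ u huY) _ (fJ v hvY)
      rw [← sY u huY, ← sY v hvY, su, sv]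
    have key2 : ∀ u v, l ≤ u → u < v → v ≤ h → s u = k → s v = k →
        τ u * σ u v = τ u ∧ (∃ w, σ u v = w * τ u) ∧ ra (σ u v) = ra (d u) := by
      intro u v hu huv hv su sv
      have huY := inY u hu (huv.le.trans hv) su
      have hvY := inY v (hu.trans huv.le) hv sv
      have h1 : τ u * σ u v = τ u := by
        rw [hτσ u v huv (conn u v hu hv), (key u v hu huv hv su sv).1]
      refine ⟨h1, ?_, (hd u huY).2 v hvY huv (conn u v hu hv)⟩
      have h2 : Jle (σ u v) (τ u * σ u v) := by
        rw [h1]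
        exact JJ _ (Yσ u huY v hvY huv (conn u v hu hv)) _ (Yτ u huY)
      obtain ⟨w, hw⟩ := stab_left h2
      rw [h1] at hw
      exact ⟨w, hw⟩
    have same : τ x = τ x' ∧ ra (d x) = ra (d x') := by
      rcases lt_trichotomy x x' with hlt | heq | hlt
      · exact key x x' hlx hlt (hxy'.le.trans hyh') sx sx'
      · rw [heq]; exact ⟨rfl, rfl⟩
      · have := key x' x hlx' hlt (hxy.le.trans hyh) sx' sx
        exact ⟨this.1.symm, this.2.symm⟩
    obtain ⟨a1, ⟨w, hw⟩, r1⟩ := key2 x y hlx hxy hyh sx sy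
    obtain ⟨a2, ⟨w', hw'⟩, r2⟩ := key2 x' y' hlx' hxy' hyh' sx' sy'
    rw [← same.1] at a2 hw'
    rw [← same.2, ← r1] at r2
    have m1 : σ x y * σ x y = σ x y := by
      conv_lhs => rw [hw, mul_assoc, ← hw, a1]
      exact hw.symm
    have m2 : σ x y * σ x' y' = σ x y := by
      conv_lhs => rw [hw, mul_assoc, a2]
      exact hw.symm
    refine ⟨?_, m1⟩
    have : σ x' y' ∈ ra (σ x y) := r2 ▸ mem_ra _
    obtain ⟨t, ht⟩ := this
    have ht : σ x y * t = σ x' y' := ht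
    rw [← m2, ← ht, ← mul_assoc, m1]
  · have notY : ∀ u, l ≤ u → u ≤ h → u ∉ Y := by
      intro u h1 h2 h3
      have h4 := sYle u h3
      have h5 := (hz u h1 h2).2
      omega
    have tr : ∀ u, l ≤ u → u ≤ h → s u = k → s' u = k - J.card := by
      intro u h1 h2 h3
      have := sN u (notY u h1 h2)
      omega
    refine hs'2 (k - J.card) l h ?_ x y x' y' hlx hxy hyh hlx' hxy' hyh'
      (tr x hlx (hxy.le.trans hyh) sx) (tr y (hlx.trans hxy.le) hyh sy)
      (tr x' hlx' (hxy'.le.trans hyh') sx') (tr y' (hlx'.trans hxy'.le) hyh' sy')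
    intro z h1 h2
    have h3 := sN z (notY z h1 h2)
    have h4 := (hz z h1 h2).2
    refine ⟨?_, by omega⟩
    rintro (h | h)
    · exact inC z h1 h2 h
    · exact notY z h1 h2 h

end FactSplit

theorem factorisation_split_finite {α S : Type*} [LinearOrder α] [Fintype α]
    [Semigroup S] [Fintype S] (σ : α → α → S) (hσ : IsAdditive σ) :
    ∃ s : α → ℕ, (∀ x, 1 ≤ s x ∧ s x ≤ Fintype.card S) ∧ IsRamseyanSplit σ s := by
  classical
  rcases isEmpty_or_nonempty α with hα | hα
  · exact ⟨fun _ => 0, fun x => (hα.false x).elim, fun k x => (hα.false x).elim⟩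
  obtain ⟨b, hb⟩ := Finite.exists_min (id : α → α)
  have hb : ∀ x, b ≤ x := hb
  haveI : Finite (WithOne S) := inferInstanceAs (Finite (Option S))
  let c : S := σ b b
  let U : Finset (WithOne S) := Finset.univ.map ⟨((↑) : S → WithOne S), WithOne.coe_injective⟩
  have memU : ∀ t : S, (t : WithOne S) ∈ U := fun t => by simp [U]
  have oneU : (1 : WithOne S) ∉ U := by simp [U]
  let τ : α → S := fun x => if x = b then c else c * σ b x
  obtain ⟨s, hs1, hs2⟩ := FactSplit.main (fun x y => (σ x y : WithOne S))
    (by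
      intro x y z h1 h2
      show (σ x y : WithOne S) * (σ y z : WithOne S) = (σ x z : WithOne S)
      rw [← WithOne.coe_mul, hσ x y z h1 h2])
    U
    (by
      intro a ha t hat hta
      rcases ne_or_eq t 1 with hne | rfl
      · obtain ⟨t, rfl⟩ := WithOne.ne_one_iff_exists.1 hne
        exact memU t
      · exfalso
        obtain ⟨p, q, hpq⟩ := hta
        obtain ⟨a, rfl⟩ := WithOne.ne_one_iff_exists.1 (fun h => oneU (h ▸ ha))
        rcases ne_or_eq p 1 with hp | rfl <;>
          rcases ne_or_eq q 1 with hq | rfl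
        · obtain ⟨p, rfl⟩ := WithOne.ne_one_iff_exists.1 hp
          obtain ⟨q, rfl⟩ := WithOne.ne_one_iff_exists.1 hq
          simp only [← WithOne.coe_mul] at hpq
          exact WithOne.one_ne_coe hpq
        · obtain ⟨p, rfl⟩ := WithOne.ne_one_iff_exists.1 hp
          simp only [← WithOne.coe_mul, mul_one] at hpq
          exact WithOne.one_ne_coe hpq
        · obtain ⟨q, rfl⟩ := WithOne.ne_one_iff_exists.1 hq
          simp only [← WithOne.coe_mul, one_mul] at hpq
          exact WithOne.one_ne_coe hpq
        · simp only [one_mul, mul_one] at hpq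
          exact WithOne.one_ne_coe hpq)
    ∅ (fun x => (τ x : WithOne S)) (fun x _ => memU _) (fun x y _ _ => memU _)
    (by
      intro x y hxy _
      show (τ x : WithOne S) * (σ x y : WithOne S) = (τ y : WithOne S)
      rw [← WithOne.coe_mul]
      congr 1
      have hyb : y ≠ b := ((hb x).trans_lt hxy).ne'
      by_cases hx : x = b
      · subst hx
        simp [τ, hyb]
      · have : b < x := lt_of_le_of_ne (hb x) (Ne.symm hx)
        simp only [τ, hx, hyb, if_false, mul_assoc, hσ b x y this hxy])
  have hcard : U.card = Fintype.card S := by simp [U]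
  refine ⟨s, fun x => hcard ▸ hs1 x (by simp), ?_⟩
  intro k x y x' y' hxy hxy' hall
  have hmin : min x x' ∈ ({x, y, x', y'} : Set α) := by
    rcases min_choice x x' with h | h <;> rw [h] <;> simp
  have hmax : max y y' ∈ ({x, y, x', y'} : Set α) := by
    rcases max_choice y y' with h | h <;> rw [h] <;> simp
  have hn := hall _ hmin _ hmax
  have hle : min x x' ≤ max y y' := (min_le_left _ _).trans (hxy.le.trans (le_max_left _ _))
  have := hs2 k (min x x') (max y y')
    (fun z h1 h2 => ⟨by simp, hn.2.2 z ((min_le_left _ _).trans h1) (h2.trans (le_max_right _ _))⟩)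
    x y x' y' (min_le_left _ _) hxy (le_max_left _ _) (min_le_right _ _) hxy' (le_max_right _ _)
    (hall x (by simp) x (by simp)).1 (hall y (by simp) y (by simp)).1
    (hall x' (by simp) x' (by simp)).1 (hall y' (by simp) y' (by simp)).1
  refine ⟨WithOne.coe_injective this.1, WithOne.coe_injective ?_⟩
  rw [WithOne.coe_mul]
  exact this.2
end

section
/- For every complete linear ordering α, every finite semigroup (S,·), and every additive labelling σ from α to S, there exists a ramseyan split for (α,σ) of height at most 3|S|. -/
namespace FactSplit

/-- The `J`-preorder, computed in `S` with a unit adjoined. -/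
def JLe {S : Type*} [Semigroup S] (a b : S) : Prop :=
  ∃ u v : WithOne S, (a : WithOne S) = u * b * v

theorem JLe.refl {S : Type*} [Semigroup S] (a : S) : JLe a a := ⟨1, 1, by simp⟩

theorem JLe.trans {S : Type*} [Semigroup S] {a b c : S} (h : JLe a b) (h' : JLe b c) :
    JLe a c := by
  obtain ⟨u, v, h⟩ := h
  obtain ⟨u', v', h'⟩ := h'
  exact ⟨u * u', v' * v, by rw [h, h']; simp only [mul_assoc]⟩

theorem JLe.mul_right {S : Type*} [Semigroup S] (a b : S) : JLe (a * b) a :=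
  ⟨1, b, by simp⟩

theorem JLe.mul_left {S : Type*} [Semigroup S] (a b : S) : JLe (a * b) b :=
  ⟨a, 1, by simp⟩

theorem exists_idem_pow {M : Type*} [Monoid M] [Finite M] (x : M) :
    ∃ n : ℕ, 0 < n ∧ x ^ n * x ^ n = x ^ n := by
  obtain ⟨i, j, hij, h⟩ := Finite.exists_ne_map_eq_of_infinite (fun n : ℕ => x ^ n)
  wlog hlt : i < j generalizing i j
  · exact this j i hij.symm h.symm (by omega)
  change x ^ i = x ^ j at h
  obtain ⟨d, rfl⟩ : ∃ d, j = i + d := ⟨j - i, by omega⟩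
  have hd : 0 < d := by omega
  have key : ∀ k l, x ^ (i + l) = x ^ (i + l + k * d) := by
    intro k
    induction k with
    | zero => simp
    | succ k ih =>
      intro l
      rw [ih l]
      have : x ^ (i + l + k * d) = x ^ i * x ^ (l + k * d) := by rw [← pow_add]; congr 1; ring
      rw [this, h, ← pow_add]; congr 1; ring
  refine ⟨(i + 1) * d, by positivity, ?_⟩
  rw [← pow_add]
  have h2 : i ≤ (i + 1) * d := by nlinarith
  have := key (i + 1) ((i + 1) * d - i)
  rw [show i + ((i + 1) * d - i) = (i + 1) * d by omega] at this
  exact this.symm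

theorem pow_conj {M : Type*} [Monoid M] {u a v : M} (h : a = u * a * v) (n : ℕ) :
    a = u ^ n * a * v ^ n := by
  induction n with
  | zero => simp
  | succ n ih =>
    calc a = u ^ n * a * v ^ n := ih
      _ = u ^ n * (u * a * v) * v ^ n := by rw [← h]
      _ = _ := by rw [pow_succ, pow_succ']; simp only [mul_assoc]

theorem stab_right_s1 {S : Type*} [Semigroup S] [Finite S] (a b : S) (h : JLe a (a * b)) :
    ∃ w, a * b * w = a := by
  have : Finite (WithOne S) := inferInstanceAs (Finite (Option S))
  obtain ⟨u, v, h⟩ := h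
  have h' : (a : WithOne S) = u * a * (b * v) := by
    rw [WithOne.coe_mul] at h; simpa only [mul_assoc] using h
  obtain ⟨n, hn, hi⟩ := exists_idem_pow ((b : WithOne S) * v)
  have h1 := pow_conj h' n
  have h2 : (a : WithOne S) * (b * v) ^ n = a := by
    rw [h1, mul_assoc, hi]
  obtain ⟨k, rfl⟩ : ∃ k, n = k + 1 := ⟨n - 1, by omega⟩
  rw [pow_succ'] at h2
  have h3 : (a : WithOne S) * b * (v * (b * v) ^ k) = a := by
    simpa only [mul_assoc] using h2
  generalize v * ((b : WithOne S) * v) ^ k = w at h3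
  rcases w with _ | w
  · change (a : WithOne S) * b * 1 = a at h3
    have : a * b = a := by
      rw [mul_one] at h3; exact_mod_cast h3
    exact ⟨b, by rw [this, this]⟩
  · exact ⟨w, WithOne.coe_injective h3⟩

theorem stab_left_s1 {S : Type*} [Semigroup S] [Finite S] (a b : S) (h : JLe a (b * a)) :
    ∃ w, w * (b * a) = a := by
  have : Finite (WithOne S) := inferInstanceAs (Finite (Option S))
  obtain ⟨u, v, h⟩ := h
  have h' : (a : WithOne S) = (u * b) * a * v := by
    rw [WithOne.coe_mul] at h; simpa only [mul_assoc] using h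
  obtain ⟨n, hn, hi⟩ := exists_idem_pow (u * (b : WithOne S))
  have h1 := pow_conj h' n
  have h2 : (u * (b : WithOne S)) ^ n * a = a := by
    rw [h1, mul_assoc, ← mul_assoc, hi]
  obtain ⟨k, rfl⟩ : ∃ k, n = k + 1 := ⟨n - 1, by omega⟩
  rw [pow_succ] at h2
  have h3 : ((u * b) ^ k * u) * ((b : WithOne S) * a) = a := by
    simpa only [mul_assoc] using h2
  generalize (u * (b : WithOne S)) ^ k * u = w at h3
  rcases w with _ | w
  · change 1 * ((b : WithOne S) * a) = a at h3
    have : b * a = a := by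
      rw [one_mul] at h3; exact_mod_cast h3
    exact ⟨b, by rw [this, this]⟩
  · exact ⟨w, WithOne.coe_injective h3⟩

/-- Properties of a `J`-class used in the colouring lemma. -/
structure JProps {S : Type*} [Semigroup S] (J : Set S) : Prop where
  hR : ∀ a b, a ∈ J → a * b ∈ J → ∃ w, a * b * w = a
  hL : ∀ a b, a ∈ J → b * a ∈ J → ∃ w, w * (b * a) = a
  cR : ∀ a b w, a ∈ J → a * b * w = a → a * b ∈ J
  cL : ∀ a b w, a ∈ J → w * (b * a) = a → b * a ∈ J

theorem exists_J {S : Type*} [Semigroup S] [Finite S] (I : Finset S) (hne : I.Nonempty)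
    (hI : ∀ a ∈ I, ∀ s, s * a ∈ I ∧ a * s ∈ I) :
    ∃ J : Set S, J.Nonempty ∧ J ⊆ I ∧ JProps J ∧
      (∀ a ∈ I, ∀ b ∈ I, a * b ∈ J → a ∈ J ∧ b ∈ J) ∧
      (∀ a ∈ I, ∀ s, a ∉ J → s * a ∉ J ∧ a * s ∉ J) := by
  obtain ⟨m, hm, hmax⟩ := I.exists_max_image (fun m => Set.ncard {x | JLe x m}) hne
  have hmax' : ∀ a ∈ I, JLe m a → JLe a m := by
    intro a ha hma
    have hsub : {x | JLe x m} ⊆ {x | JLe x a} := fun x hx => JLe.trans hx hma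
    have := Set.eq_of_subset_of_ncard_le hsub (hmax a ha) (Set.toFinite _)
    have h2 : a ∈ {x | JLe x a} := JLe.refl a
    rw [← this] at h2
    exact h2
  refine ⟨{a | a ∈ I ∧ JLe m a}, ⟨m, hm, JLe.refl m⟩, fun a h => h.1, ⟨?_, ?_, ?_, ?_⟩, ?_, ?_⟩
  · intro a b ha hab
    exact stab_right_s1 a b ((hmax' a ha.1 ha.2).trans hab.2)
  · intro a b ha hab
    exact stab_left_s1 a b ((hmax' a ha.1 ha.2).trans hab.2)
  · intro a b w ha h
    refine ⟨(hI a ha.1 b).2, ha.2.trans ?_⟩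
    conv_lhs => rw [← h]
    exact JLe.mul_right _ _
  · intro a b w ha h
    refine ⟨(hI a ha.1 b).1, ha.2.trans ?_⟩
    conv_lhs => rw [← h]
    exact JLe.mul_left _ _
  · intro a ha b hb h
    exact ⟨⟨ha, h.2.trans (JLe.mul_right _ _)⟩, ⟨hb, h.2.trans (JLe.mul_left _ _)⟩⟩
  · intro a ha s hn
    exact ⟨fun h => hn ⟨ha, h.2.trans (JLe.mul_left _ _)⟩,
      fun h => hn ⟨ha, h.2.trans (JLe.mul_right _ _)⟩⟩

theorem exists_rep {X Y : Type*} (f : X → Y) :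
    ∃ r : X → X, (∀ x, f (r x) = f x) ∧ ∀ x y, f x = f y → r x = r y := by
  classical
  have : ∀ x, ∃ x', f x' = f x := fun x => ⟨x, rfl⟩
  refine ⟨fun x => Classical.choose (p := fun x' => f x' = f x) ⟨x, rfl⟩, ?_, ?_⟩
  · intro x
    exact Classical.choose_spec (p := fun x' => f x' = f x) ⟨x, rfl⟩
  · intro x y h
    simp only [h]

theorem colouring {α S : Type*} [LinearOrder α] [Semigroup S] (σ : α → α → S)
    (hσ : IsAdditive σ) (J : Set S) (hJ : JProps J) (P : Set α) (b : α)
    (hb : ∀ x ∈ P, b < x) (hbJ : ∀ x ∈ P, σ b x ∈ J)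
    (hPJ : ∀ x ∈ P, ∀ y ∈ P, x < y → σ x y ∈ J) :
    ∃ col : α → S, (∀ x ∈ P, col x ∈ J) ∧
      ∀ x ∈ P, ∀ y ∈ P, ∀ x' ∈ P, ∀ y' ∈ P, x < y → x' < y' →
        col x = col y → col x = col x' → col x = col y' →
        σ x y = σ x' y' ∧ σ x y * σ x y = σ x y := by
  classical
  by_cases hsub : P.Subsingleton
  · exact ⟨fun x => σ b x, hbJ, fun x hx y hy x' _ y' _ hxy =>
      absurd (hsub hx hy) hxy.ne⟩
  -- idempotent data at every point
  have base : ∀ x ∈ P, ∀ y ∈ P, x < y → ∃ e u w, u * σ b x = e ∧ σ x y * w = e ∧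
      e * e = e ∧ σ b x * e = σ b x ∧ e * σ x y = σ x y := by
    intro x hx y hy hxy
    have ha := hσ b x y (hb x hx) hxy
    obtain ⟨w, hw⟩ := hJ.hR _ (σ x y) (hbJ x hx) (by rw [ha]; exact hbJ y hy)
    obtain ⟨u, hu⟩ := hJ.hL (σ x y) (σ b x) (hPJ x hx y hy hxy) (by rw [ha]; exact hbJ y hy)
    have h1 : u * σ b x = σ x y * w := by
      conv_rhs => rw [← hu]
      conv_lhs => rw [← hw]
      simp only [mul_assoc]
    refine ⟨u * σ b x, u, w, rfl, h1.symm, ?_, ?_, ?_⟩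
    · conv_lhs => rw [h1]
      rw [← h1]
      conv_lhs => rhs; rw [h1]
      rw [mul_assoc, ← mul_assoc (σ b x), hw]
    · rw [h1, ← mul_assoc, hw]
    · rw [mul_assoc, hu]
  have data : ∀ x : P, ∃ e t, e * e = e ∧ σ b x * e = σ b x ∧ t * σ b x = e ∧
      ∀ y ∈ P, (x : α) < y → e * σ x y = σ x y ∧ ∃ w, σ x y * w = e := by
    rintro ⟨x, hx⟩
    by_cases hmax : ∃ y ∈ P, x < y
    · obtain ⟨y, hy, hxy⟩ := hmax
      obtain ⟨e, u, w, h1, h2, h3, h4, h5⟩ := base x hx y hy hxy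
      refine ⟨e, u, h3, h4, h1, ?_⟩
      intro y' hy' hxy'
      rcases lt_trichotomy y y' with h | h | h
      · have hm := hσ x y y' hxy h
        obtain ⟨z, hz⟩ := hJ.hR _ (σ y y') (hPJ x hx y hy hxy)
          (by rw [hm]; exact hPJ x hx y' hy' hxy')
        refine ⟨by rw [← hm, ← mul_assoc, h5], z * w, ?_⟩
        rw [← mul_assoc, ← hm, hz, h2]
      · subst h; exact ⟨h5, w, h2⟩
      · have hm := hσ x y' y hxy' h
        obtain ⟨z, hz⟩ := hJ.hR _ (σ y' y) (hPJ x hx y' hy' hxy')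
          (by rw [hm]; exact hPJ x hx y hy hxy)
        rw [hm] at hz
        refine ⟨by rw [← hz, ← mul_assoc, h5], σ y' y * w, ?_⟩
        rw [← mul_assoc, hm, h2]
    · push Not at hmax
      obtain ⟨x', hx', hne⟩ : ∃ x' ∈ P, x' ≠ x := by
        by_contra hcon
        push Not at hcon
        exact hsub fun p hp q hq => (hcon p hp).trans (hcon q hq).symm
      have hlt : x' < x := lt_of_le_of_ne (hmax x' hx') hne
      obtain ⟨e, u, w, h1, h2, h3, h4, h5⟩ := base x' hx' x hx hlt
      have ha := hσ b x' x (hb x' hx') hlt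
      refine ⟨w * σ x' x, w * u, ?_, ?_, ?_, ?_⟩
      · rw [mul_assoc, ← mul_assoc (σ x' x), h2, h5]
      · rw [← ha, mul_assoc, ← mul_assoc (σ x' x), h2, h5]
      · rw [← ha, mul_assoc, ← mul_assoc u, h1, h5]
      · intro y hy hxy
        exact absurd hxy (not_lt.mpr (hmax y hy))
  choose e t hee hae hta hK using data
  let K : P → Set S := fun x => {g | e x * g = g ∧ ∃ w, g * w = e x}
  have hKeq : ∀ x y : P, ∀ g, g ∈ K x → g ∈ K y → e y * e x = e x := by
    rintro x y g ⟨-, w, hw⟩ ⟨h2, -⟩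
    rw [← hw, ← mul_assoc, h2]
  have hKsub : ∀ x y : P, ∀ g, g ∈ K x → g ∈ K y → K x ⊆ K y := by
    intro x y g hx hy h hh
    obtain ⟨h1, w, hw⟩ := hh
    have e1 := hKeq x y g hx hy
    have e2 := hKeq y x g hy hx
    refine ⟨by rw [← h1, ← mul_assoc, e1], w * e y, ?_⟩
    rw [← mul_assoc, hw, e2]
  have hRR : ∀ x y : P, ∃ w, σ b x * w = σ b y := by
    intro x y
    rcases lt_trichotomy (x : α) y with h | h | h
    · exact ⟨σ x y, hσ b x y (hb x x.2) h⟩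
    · exact ⟨e x, by rw [hae, h]⟩
    · have hm := hσ b y x (hb y y.2) h
      obtain ⟨w, hw⟩ := hJ.hR _ (σ y x) (hbJ y y.2) (by rw [hm]; exact hbJ x x.2)
      exact ⟨w, by rw [← hm, hw]⟩
  obtain ⟨r, hr1, hr2⟩ := exists_rep K
  let c : P → S := fun x => e (r x) * t (r x) * σ b x
  have hcK : ∀ x, c x ∈ K x := by
    intro x
    rw [← hr1 x]
    obtain ⟨w, hw⟩ := hRR x (r x)
    refine ⟨?_, w, ?_⟩
    · simp only [c, ← mul_assoc, hee]
    · simp only [c, mul_assoc, hw, hta, hee]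
  have hback : ∀ x : P, σ b (r x) * c x = σ b x := by
    intro x
    obtain ⟨s, hs⟩ := hRR (r x) x
    simp only [c]
    rw [← mul_assoc, ← mul_assoc, hae, ← hs, ← mul_assoc, mul_assoc _ (t _), hta, hae]
  have hKK : ∀ x y : P, c x = c y → K x = K y := by
    intro x y h
    have h1 := hcK x
    have h2 := hcK y
    rw [← h] at h2
    exact (hKsub x y _ h1 h2).antisymm (hKsub y x _ h2 h1)
  have hinj : ∀ x y : P, c x = c y → σ b x = σ b y := by
    intro x y h
    rw [← hback x, ← hback y, h, hr2 x y (hKK x y h)]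
  have hcJ : ∀ x : P, c x ∈ J := by
    intro x
    exact hJ.cL _ _ (σ b (r x)) (hbJ x x.2) (hback x)
  have hval : ∀ x y : P, (x : α) < y → c x = c y → σ x y = e x := by
    intro x y hxy h
    have h1 := (hK x y y.2 hxy).1
    have h2 := hσ b x y (hb x x.2) hxy
    rw [← hinj x y h] at h2
    rw [← h1]
    conv_lhs => rw [← hta x]
    rw [mul_assoc, h2, hta]
  refine ⟨fun x => if h : x ∈ P then c ⟨x, h⟩ else σ b x, ?_, ?_⟩
  · intro x hx
    simp only [hx, dif_pos]
    exact hcJ _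
  · intro x hx y hy x' hx' y' hy' hxy hxy' h1 h2 h3
    simp only [hx, hy, hx', hy', dif_pos] at h1 h2 h3
    have v1 := hval ⟨x, hx⟩ ⟨y, hy⟩ hxy h1
    have v2 := hval ⟨x', hx'⟩ ⟨y', hy'⟩ hxy' (h2.symm.trans h3)
    simp only at v1 v2
    rw [v1, v2]
    refine ⟨?_, hee _⟩
    have g1 := hcK ⟨x, hx⟩
    have g2 := hcK ⟨x', hx'⟩
    rw [← h2] at g2
    have e1 := hKeq _ _ _ g2 g1
    have e2 := hinj _ _ h2
    rw [← e1]
    conv_lhs => rw [← hta]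
    conv_rhs => lhs; rw [← hta]
    rw [mul_assoc, e2, hae]

theorem colouring' {α S : Type*} [LinearOrder α] [Semigroup S] (σ : α → α → S)
    (hσ : IsAdditive σ) (J : Set S) (hJ : JProps J) (P : Set α) (b : α)
    (hb : ∀ x ∈ P, x < b) (hbJ : ∀ x ∈ P, σ x b ∈ J)
    (hPJ : ∀ x ∈ P, ∀ y ∈ P, x < y → σ x y ∈ J) :
    ∃ col : α → S, (∀ x ∈ P, col x ∈ J) ∧
      ∀ x ∈ P, ∀ y ∈ P, ∀ x' ∈ P, ∀ y' ∈ P, x < y → x' < y' →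
        col x = col y → col x = col x' → col x = col y' →
        σ x y = σ x' y' ∧ σ x y * σ x y = σ x y := by
  obtain ⟨col, h1, h2⟩ := colouring (α := αᵒᵈ) (S := Sᵐᵒᵖ)
    (fun x y => MulOpposite.op (σ (OrderDual.ofDual y) (OrderDual.ofDual x)))
    (by
      intro x y z hxy hyz
      rw [← MulOpposite.op_mul]
      exact congrArg _ (hσ (OrderDual.ofDual z) (OrderDual.ofDual y) (OrderDual.ofDual x) hyz hxy))
    (MulOpposite.unop ⁻¹' J)
    (by
      constructor
      · intro a b' ha hab
        obtain ⟨w, hw⟩ := hJ.hL a.unop b'.unop ha hab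
        exact ⟨MulOpposite.op w, MulOpposite.unop_injective hw⟩
      · intro a b' ha hab
        obtain ⟨w, hw⟩ := hJ.hR a.unop b'.unop ha hab
        exact ⟨MulOpposite.op w, MulOpposite.unop_injective hw⟩
      · intro a b' w ha h
        exact hJ.cL a.unop b'.unop w.unop ha (congrArg MulOpposite.unop h)
      · intro a b' w ha h
        exact hJ.cR a.unop b'.unop w.unop ha (congrArg MulOpposite.unop h))
    (OrderDual.ofDual ⁻¹' P) (OrderDual.toDual b)
    (fun x hx => hb _ hx) (fun x hx => hbJ _ hx) (fun x hx y hy hxy => hPJ _ hy _ hx hxy)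
  refine ⟨fun x => (col (OrderDual.toDual x)).unop, fun x hx => h1 _ hx, ?_⟩
  intro x hx y hy x' hx' y' hy' hxy hxy' e1 e2 e3
  have e1 := MulOpposite.unop_injective e1
  have e2 := MulOpposite.unop_injective e2
  have e3 := MulOpposite.unop_injective e3
  have := h2 (OrderDual.toDual y) hy (OrderDual.toDual x) hx (OrderDual.toDual y') hy'
    (OrderDual.toDual x') hx' hxy hxy' e1.symm (e1.symm.trans e3) (e1.symm.trans e2)
  exact ⟨congrArg MulOpposite.unop this.1, congrArg MulOpposite.unop this.2⟩

/-- Relative version of the Ramsey property. -/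
def RamseyOn {α S : Type*} [LinearOrder α] [Semigroup S] (σ : α → α → S) (A : Set α)
    (s : α → ℕ) : Prop :=
  ∀ x ∈ A, ∀ y ∈ A, ∀ x' ∈ A, ∀ y' ∈ A, x < y → x' < y' →
    s x = s y → s x = s x' → s x = s y' →
    (∀ z ∈ A, min x x' ≤ z → z ≤ max y y' → s x ≤ s z) →
    σ x y = σ x' y' ∧ σ x y * σ x y = σ x y

theorem exists_max_free {α S : Type*} [LinearOrder α] (σ : α → α → S) (A : Set α) (J : Set S) :
    ∃ B ⊆ A, (∀ x ∈ B, ∀ y ∈ B, x < y → σ x y ∉ J) ∧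
      ∀ x ∈ A, x ∉ B → (∃ b ∈ B, b < x ∧ σ b x ∈ J) ∨ (∃ b ∈ B, x < b ∧ σ x b ∈ J) := by
  obtain ⟨B, hB⟩ := zorn_subset {B : Set α | B ⊆ A ∧ ∀ x ∈ B, ∀ y ∈ B, x < y → σ x y ∉ J} (by
    intro c hc hchain
    refine ⟨⋃₀ c, ⟨Set.sUnion_subset fun t ht => (hc ht).1, ?_⟩,
      fun t ht => Set.subset_sUnion_of_mem ht⟩
    rintro x ⟨t, ht, hx⟩ y ⟨t', ht', hy⟩ hxy
    rcases hchain.total ht ht' with h | h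
    · exact (hc ht').2 x (h hx) y hy hxy
    · exact (hc ht).2 x hx y (h hy) hxy)
  refine ⟨B, hB.prop.1, hB.prop.2, ?_⟩
  intro x hx hxB
  by_contra hcon
  push Not at hcon
  obtain ⟨c1, c2⟩ := hcon
  apply hxB
  have : insert x B ∈ {B : Set α | B ⊆ A ∧ ∀ x ∈ B, ∀ y ∈ B, x < y → σ x y ∉ J} := by
    refine ⟨Set.insert_subset hx hB.prop.1, ?_⟩
    rintro p (rfl | hp) q (rfl | hq) hpq
    · exact absurd hpq (lt_irrefl _)
    · exact c2 q hq hpq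
    · exact c1 p hp hpq
    · exact hB.prop.2 p hp q hq hpq
  exact hB.le_of_ge this (Set.subset_insert _ _) (Set.mem_insert _ _)

theorem main_s1 {α S : Type*} [LinearOrder α] [Semigroup S] [Finite S] (σ : α → α → S)
    (hσ : IsAdditive σ) (n : ℕ) : ∀ (I : Finset S), I.card = n →
    (∀ a ∈ I, ∀ s, s * a ∈ I ∧ a * s ∈ I) → ∀ A : Set α,
    (∀ x ∈ A, ∀ y ∈ A, x < y → σ x y ∈ I) →
    ∃ s : α → ℕ, (∀ x, 1 ≤ s x ∧ s x ≤ 2 * n + 1) ∧ RamseyOn σ A s := by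
  classical
  induction n using Nat.strong_induction_on with
  | _ n ih =>
  intro I hn hI A hA
  rcases I.eq_empty_or_nonempty with rfl | hne
  · refine ⟨fun _ => 1, fun _ => ⟨le_rfl, Nat.le_add_left 1 _⟩, ?_⟩
    intro x hx y hy x' _ y' _ hxy
    exact absurd (hA x hx y hy hxy) (by simp)
  obtain ⟨J, hJne, hJI, hJ, hF, hId⟩ := exists_J I hne hI
  obtain ⟨B, hBA, hBfree, hBmax⟩ := exists_max_free σ A J
  let Jf : Finset S := I.filter (· ∈ J)
  let Irest : Finset S := I.filter (· ∉ J)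
  have hcard : Jf.card + Irest.card = n := by
    rw [← hn]; exact Finset.card_filter_add_card_filter_not _
  have hJpos : 0 < Jf.card := by
    obtain ⟨a, ha⟩ := hJne
    exact Finset.card_pos.mpr ⟨a, Finset.mem_filter.mpr ⟨hJI ha, ha⟩⟩
  obtain ⟨sB, hsB, hRB⟩ := ih Irest.card (by omega) Irest rfl
    (by
      intro a ha s
      rw [Finset.mem_filter] at ha
      have h1 := hI a ha.1 s
      have h2 := hId a ha.1 s ha.2
      exact ⟨Finset.mem_filter.mpr ⟨h1.1, h2.1⟩, Finset.mem_filter.mpr ⟨h1.2, h2.2⟩⟩)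
    B (by
      intro x hx y hy hxy
      exact Finset.mem_filter.mpr ⟨hA x (hBA hx) y (hBA hy) hxy, hBfree x hx y hy hxy⟩)
  -- the encoding of `J`
  obtain ⟨enc, henc1, henc2⟩ : ∃ enc : S → ℕ, (∀ a ∈ J, enc a < Jf.card) ∧
      ∀ a ∈ J, ∀ b ∈ J, enc a = enc b → a = b := by
    have hm : ∀ a ∈ J, a ∈ Jf := fun a ha => Finset.mem_filter.mpr ⟨hJI ha, ha⟩
    refine ⟨fun a => if h : a ∈ Jf then (Jf.equivFin ⟨a, h⟩ : ℕ) else 0, ?_, ?_⟩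
    · intro a ha
      simp only [hm a ha, dif_pos]
      exact Fin.is_lt _
    · intro a ha b hb h
      simp only [hm a ha, hm b hb, dif_pos] at h
      have := Jf.equivFin.injective (Fin.ext h)
      exact congrArg Subtype.val this
  -- colourings
  let PL : α → Set α := fun b => {x | x ∈ A ∧ b < x ∧ σ b x ∈ J}
  let PR : α → Set α := fun b => {x | x ∈ A ∧ x < b ∧ σ x b ∈ J}
  have hcL : ∀ b : B, ∃ col : α → S, (∀ x ∈ PL b, col x ∈ J) ∧
      ∀ x ∈ PL b, ∀ y ∈ PL b, ∀ x' ∈ PL b, ∀ y' ∈ PL b, x < y → x' < y' →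
        col x = col y → col x = col x' → col x = col y' →
        σ x y = σ x' y' ∧ σ x y * σ x y = σ x y := by
    rintro ⟨b, hbB⟩
    refine colouring σ hσ J hJ (PL b) b (fun x hx => hx.2.1) (fun x hx => hx.2.2) ?_
    intro x hx y hy hxy
    exact (hF _ (hA b (hBA hbB) x hx.1 hx.2.1) _ (hA x hx.1 y hy.1 hxy)
      (by rw [hσ b x y hx.2.1 hxy]; exact hy.2.2)).2
  have hcR : ∀ b : B, ∃ col : α → S, (∀ x ∈ PR b, col x ∈ J) ∧
      ∀ x ∈ PR b, ∀ y ∈ PR b, ∀ x' ∈ PR b, ∀ y' ∈ PR b, x < y → x' < y' →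
        col x = col y → col x = col x' → col x = col y' →
        σ x y = σ x' y' ∧ σ x y * σ x y = σ x y := by
    rintro ⟨b, hbB⟩
    refine colouring' σ hσ J hJ (PR b) b (fun x hx => hx.2.1) (fun x hx => hx.2.2) ?_
    intro x hx y hy hxy
    exact (hF _ (hA x hx.1 y hy.1 hxy) _ (hA y hy.1 b (hBA hbB) hy.2.1)
      (by rw [hσ x y b hxy hy.2.1]; exact hx.2.2)).1
  choose colL hLJ hLR using hcL
  choose colR hRJ hRR using hcR
  -- the links are unique inside a gap
  have uniqL : ∀ b ∈ B, ∀ b' ∈ B, ∀ x ∈ PL b, b' < x → b' ≤ b := by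
    intro b hb b' hb' x hx hlt
    by_contra hcon
    push Not at hcon
    exact hBfree b hb b' hb' hcon (hF _ (hA b (hBA hb) b' (hBA hb') hcon) _
      (hA b' (hBA hb') x hx.1 hlt) (by rw [hσ b b' x hcon hlt]; exact hx.2.2)).1
  have uniqR : ∀ b ∈ B, ∀ b' ∈ B, ∀ x ∈ PR b, x < b' → b ≤ b' := by
    intro b hb b' hb' x hx hlt
    by_contra hcon
    push Not at hcon
    exact hBfree b' hb' b hb hcon (hF _ (hA x hx.1 b' (hBA hb') hlt) _
      (hA b' (hBA hb') b (hBA hb) hcon) (by rw [hσ x b' b hlt hcon]; exact hx.2.2)).2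
  let N := 2 * Irest.card + 1
  -- the levels
  have hlev : ∀ x, ∃ k, (1 ≤ k ∧ k ≤ 2 * n + 1) ∧ (x ∈ B → k = sB x) ∧
      (x ∈ A → x ∉ B →
        (∃ b : B, x ∈ PL b ∧ k = N + 1 + enc (colL b x)) ∨
        (∃ b : B, x ∈ PR b ∧ k = N + Jf.card + 1 + enc (colR b x))) := by
    intro x
    by_cases hxB : x ∈ B
    · exact ⟨sB x, ⟨(hsB x).1, by have := (hsB x).2; omega⟩, fun _ => rfl,
        fun _ h => absurd hxB h⟩
    by_cases hxA : x ∈ A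
    · rcases hBmax x hxA hxB with ⟨b, hb, h1, h2⟩ | ⟨b, hb, h1, h2⟩
      · have hp : x ∈ PL b := ⟨hxA, h1, h2⟩
        have := henc1 _ (hLJ ⟨b, hb⟩ x hp)
        refine ⟨N + 1 + enc (colL ⟨b, hb⟩ x), ?_, fun h => absurd h hxB,
          fun _ _ => Or.inl ⟨⟨b, hb⟩, hp, rfl⟩⟩
        simp only [N]; omega
      · have hp : x ∈ PR b := ⟨hxA, h1, h2⟩
        have := henc1 _ (hRJ ⟨b, hb⟩ x hp)
        refine ⟨N + Jf.card + 1 + enc (colR ⟨b, hb⟩ x), ?_, fun h => absurd h hxB,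
          fun _ _ => Or.inr ⟨⟨b, hb⟩, hp, rfl⟩⟩
        simp only [N]; omega
    · exact ⟨1, by omega, fun h => absurd h hxB, fun h => absurd h hxA⟩
  choose s hs1 hs2 hs3 using hlev
  refine ⟨s, hs1, ?_⟩
  intro x hx y hy x' hx' y' hy' hxy hxy' e1 e2 e3 hz
  have hsBle : ∀ z ∈ B, s z ≤ N := fun z hzB => by rw [hs2 z hzB]; exact (hsB z).2
  have hBlow : ∀ z ∈ A, s z ≤ N → z ∈ B := by
    intro z hzA hle
    by_contra hzB
    rcases hs3 z hzA hzB with ⟨b, -, h⟩ | ⟨b, -, h⟩ <;> omega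
  by_cases hk : s x ≤ N
  · have bx := hBlow x hx hk
    have bY := hBlow y hy (by omega)
    have bx' := hBlow x' hx' (by omega)
    have bYY := hBlow y' hy' (by omega)
    rw [hs2 x bx, hs2 y bY] at e1
    rw [hs2 x bx, hs2 x' bx'] at e2
    rw [hs2 x bx, hs2 y' bYY] at e3
    refine hRB x bx y bY x' bx' y' bYY hxy hxy' e1 e2 e3 ?_
    intro z hzB h1 h2
    have := hz z (hBA hzB) h1 h2
    rwa [hs2 x bx, hs2 z hzB] at this
  push Not at hk
  have hno : ∀ z ∈ B, min x x' ≤ z → z ≤ max y y' → False := by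
    intro z hzB h1 h2
    have := hz z (hBA hzB) h1 h2
    have := hsBle z hzB
    omega
  have hnB : ∀ z, N < s z → z ∉ B := fun z h hzB => by have := hsBle z hzB; omega
  have mx1 : min x x' ≤ x := min_le_left _ _
  have mx2 : min x x' ≤ x' := min_le_right _ _
  have my1 : y ≤ max y y' := le_max_left _ _
  have my2 : y' ≤ max y y' := le_max_right _ _
  -- levels of type L
  by_cases hkL : s x ≤ N + Jf.card
  · have getL : ∀ z ∈ A, s x = s z →
        ∃ b : B, z ∈ PL b ∧ s z = N + 1 + enc (colL b z) := by
      intro z hzA he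
      rcases hs3 z hzA (hnB z (by omega)) with h | ⟨b, -, h⟩
      · exact h
      · omega
    obtain ⟨b, hb1, hb2⟩ := getL x hx rfl
    have same : ∀ z ∈ A, s x = s z → min x x' ≤ z → z ≤ max y y' →
        z ∈ PL b ∧ colL b x = colL b z := by
      intro z hzA he h1 h2
      obtain ⟨b', hb1', hb2'⟩ := getL z hzA he
      have l1 : (b' : α) < min x x' := by
        by_contra hc
        push Not at hc
        exact hno b' b'.2 hc (hb1'.2.1.le.trans h2)
      have l2 : (b : α) < min x x' := by
        by_contra hc
        push Not at hc
        exact hno b b.2 hc (hb1.2.1.le.trans (hxy.le.trans my1))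
      have hbb : b' = b := Subtype.ext (le_antisymm
        (uniqL b b.2 b' b'.2 x hb1 (l1.trans_le mx1))
        (uniqL b' b'.2 b b.2 z hb1' (l2.trans_le h1)))
      subst hbb
      exact ⟨hb1', henc2 _ (hLJ _ _ hb1) _ (hLJ _ _ hb1') (by omega)⟩
    have q1 := same y hy e1 (mx1.trans hxy.le) my1
    have q2 := same x' hx' e2 mx2 (hxy'.le.trans my2)
    have q3 := same y' hy' e3 (mx2.trans hxy'.le) my2
    exact hLR b x hb1 y q1.1 x' q2.1 y' q3.1 hxy hxy' q1.2 q2.2 q3.2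
  · push Not at hkL
    have getR : ∀ z ∈ A, s x = s z →
        ∃ b : B, z ∈ PR b ∧ s z = N + Jf.card + 1 + enc (colR b z) := by
      intro z hzA he
      rcases hs3 z hzA (hnB z (by omega)) with ⟨b, hb, h⟩ | h
      · have := henc1 _ (hLJ b z hb)
        omega
      · exact h
    obtain ⟨b, hb1, hb2⟩ := getR x hx rfl
    have same : ∀ z ∈ A, s x = s z → min x x' ≤ z → z ≤ max y y' →
        z ∈ PR b ∧ colR b x = colR b z := by
      intro z hzA he h1 h2
      obtain ⟨b', hb1', hb2'⟩ := getR z hzA he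
      have l1 : max y y' < (b' : α) := by
        by_contra hc
        push Not at hc
        exact hno b' b'.2 (h1.trans hb1'.2.1.le) hc
      have l2 : max y y' < (b : α) := by
        by_contra hc
        push Not at hc
        exact hno b b.2 (mx1.trans hb1.2.1.le) hc
      have hbb : b' = b := Subtype.ext (le_antisymm
        (uniqR b' b'.2 b b.2 z hb1' (h2.trans_lt l2))
        (uniqR b b.2 b' b'.2 x hb1 ((hxy.le.trans my1).trans_lt l1)))
      subst hbb
      exact ⟨hb1', henc2 _ (hRJ _ _ hb1) _ (hRJ _ _ hb1') (by omega)⟩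
    have q1 := same y hy e1 (mx1.trans hxy.le) my1
    have q2 := same x' hx' e2 mx2 (hxy'.le.trans my2)
    have q3 := same y' hy' e3 (mx2.trans hxy'.le) my2
    exact hRR b x hb1 y q1.1 x' q2.1 y' q3.1 hxy hxy' q1.2 q2.2 q3.2

end FactSplit

theorem factorisation_split_complete {α S : Type*} [LinearOrder α]
    (hSup : ∀ t : Set α, t.Nonempty → BddAbove t → ∃ l, IsLUB t l)
    (hInf : ∀ t : Set α, t.Nonempty → BddBelow t → ∃ l, IsGLB t l)
    [Semigroup S] [Fintype S] (σ : α → α → S) (hσ : IsAdditive σ) :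
    ∃ s : α → ℕ, (∀ x, 1 ≤ s x ∧ s x ≤ 3 * Fintype.card S) ∧ IsRamseyanSplit σ s := by
  obtain ⟨s, hs, hR⟩ := FactSplit.main_s1 σ hσ (Fintype.card S) Finset.univ rfl
    (fun a _ t => ⟨Finset.mem_univ _, Finset.mem_univ _⟩) Set.univ
    (fun x _ y _ _ => Finset.mem_univ _)
  refine ⟨s, fun x => ⟨(hs x).1, ?_⟩, ?_⟩
  · have h1 := (hs x).2
    have h2 : 0 < Fintype.card S := Fintype.card_pos_iff.mpr ⟨σ x x⟩
    omega
  · intro k x y x' y' hxy hxy' h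
    have hx := (h x (by simp) x (by simp)).1
    have hy := (h y (by simp) y (by simp)).1
    have hx' := (h x' (by simp) x' (by simp)).1
    have hy' := (h y' (by simp) y' (by simp)).1
    refine hR x trivial y trivial x' trivial y' trivial hxy hxy' (by omega) (by omega) (by omega) ?_
    intro z _ h1 h2
    rw [hx]
    rcases min_choice x x' with e1 | e1 <;> rcases max_choice y y' with e2 | e2 <;>
      rw [e1] at h1 <;> rw [e2] at h2
    · exact (h x (by simp) y (by simp)).2.2 z ((min_le_left _ _).trans h1) (h2.trans (le_max_right _ _))
    · exact (h x (by simp) y' (by simp)).2.2 z ((min_le_left _ _).trans h1) (h2.trans (le_max_right _ _))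
    · exact (h x' (by simp) y (by simp)).2.2 z ((min_le_left _ _).trans h1) (h2.trans (le_max_right _ _))
    · exact (h x' (by simp) y' (by simp)).2.2 z ((min_le_left _ _).trans h1) (h2.trans (le_max_right _ _))
end

section
/- For every alphabet A, finite semigroup (S,·), semigroup morphism φ : A⁺ → S, and nonempty word u ∈ A⁺, the word u has a ramseyan factorisation tree (for φ) of height at most 3|S|. -/
/-- Ordered unranked trees whose leaves are labelled by letters of `A`. -/
inductive FTree (A : Type) : Type
  | leaf (a : A)
  | node (children : List (FTree A))

namespace FTree

/-- The word obtained by reading the leaves from left to right. -/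
def yield {A : Type} : FTree A → List A
  | .leaf a => [a]
  | .node ts => (ts.attach.map (fun t => yield t.1)).flatten
decreasing_by simp only [FTree.node.sizeOf_spec]; have := List.sizeOf_lt_of_mem t.2; omega

/-- The height of a factorisation tree; a single leaf has height `0`. -/
def height {A : Type} : FTree A → ℕ
  | .leaf _ => 0
  | .node ts => (ts.attach.map (fun t => height t.1)).foldr max 0 + 1
decreasing_by simp only [FTree.node.sizeOf_spec]; have := List.sizeOf_lt_of_mem t.2; omega

/-- A factorisation tree is ramseyan for `φ` if every node is a leaf, or has
two children, or all its children's yields are mapped by `φ` to a common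
idempotent. -/
inductive Ramseyan {A S : Type} [Semigroup S] (φ : List A → S) : FTree A → Prop
  | leaf (a : A) : Ramseyan φ (.leaf a)
  | node (ts : List (FTree A)) (hsub : ∀ t ∈ ts, Ramseyan φ t)
      (hcond : ts.length = 2 ∨ ∃ e : S, e * e = e ∧ ∀ t ∈ ts, φ (yield t) = e) :
      Ramseyan φ (.node ts)

end FTree
def FT_jle {M : Type} [Monoid M] (a b : M) : Prop := ∃ x y, a = x * b * y

section alg
variable {M : Type} [Monoid M]

theorem FT_jle_refl (a : M) : FT_jle a a := ⟨1, 1, by simp⟩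

theorem FT_jle_trans {a b c : M} (h1 : FT_jle a b) (h2 : FT_jle b c) : FT_jle a c := by
  obtain ⟨x, y, rfl⟩ := h1
  obtain ⟨z, w, rfl⟩ := h2
  exact ⟨x * z, w * y, by simp [mul_assoc]⟩

theorem FT_jle_left (a b : M) : FT_jle (a * b) a := ⟨1, b, by simp⟩
theorem FT_jle_right (a b : M) : FT_jle (a * b) b := ⟨a, 1, by simp⟩

/-- powers of an element of a finite monoid contain an idempotent -/
theorem FT_idem_pow [Finite M] (f : M) : ∃ n, f ^ (n + 1) * f ^ (n + 1) = f ^ (n + 1) := by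
  obtain ⟨i, j, hij, h⟩ := Finite.exists_ne_map_eq_of_infinite (fun n : ℕ => f ^ n)
  wlog hlt : i < j generalizing i j
  · exact this j i hij.symm h.symm (by omega)
  obtain ⟨d, rfl⟩ := Nat.exists_eq_add_of_lt hlt
  have key : ∀ k m, f ^ (i + m + k * (d + 1)) = f ^ (i + m) := by
    intro k
    induction k with
    | zero => intro m; simp
    | succ k ih =>
      intro m
      have e : i + m + (k + 1) * (d + 1) = (i + d + 1) + (m + k * (d + 1)) := by ring
      rw [e, pow_add, ← h, ← pow_add, ← ih m]
      congr 1; ring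
  have hk := key (i + 1) (i * d + d + 1)
  refine ⟨i * d + d + i, ?_⟩
  rw [← pow_add]
  have e1 : i * d + d + i + 1 + (i * d + d + i + 1)
    = i + (i * d + d + 1) + (i + 1) * (d + 1) := by ring
  have e2 : i * d + d + i + 1 = i + (i * d + d + 1) := by ring
  rw [e1, hk, e2]

theorem FT_stab [Finite M] {a x v : M} (h : a = x * a * v) :
    (∃ y, a = y * (x * a)) ∧ (∃ y, a = (a * v) * y) := by
  have hp : ∀ n, a = x ^ n * a * v ^ n := by
    intro n
    induction n with
    | zero => simp
    | succ n ih =>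
      conv_lhs => rw [ih, h]
      rw [pow_succ, pow_succ']
      simp only [mul_assoc]
  constructor
  · obtain ⟨n, hn⟩ := FT_idem_pow x
    have h1 : x ^ (n + 1) * a = a := by
      conv_lhs => rw [hp (n + 1)]
      conv_rhs => rw [hp (n + 1)]
      simp only [← mul_assoc]; rw [hn]
    refine ⟨x ^ n, ?_⟩
    rw [← mul_assoc, ← pow_succ, h1]
  · obtain ⟨n, hn⟩ := FT_idem_pow v
    have h1 : a * v ^ (n + 1) = a := by
      conv_lhs => rw [hp (n + 1)]
      conv_rhs => rw [hp (n + 1)]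
      simp only [mul_assoc]; rw [hn]
    refine ⟨v ^ n, ?_⟩
    rw [mul_assoc, ← pow_succ', h1]

theorem FT_stabL [Finite M] {a x : M} (h : FT_jle a (x * a)) : ∃ y, a = y * (x * a) := by
  obtain ⟨u, v, h⟩ := h
  have h' : a = (u * x) * a * v := by simpa [mul_assoc] using h
  obtain ⟨y, hy⟩ := (FT_stab h').1
  exact ⟨y * u, by simpa [mul_assoc] using hy⟩

theorem FT_stabR [Finite M] {a x : M} (h : FT_jle a (a * x)) : ∃ y, a = (a * x) * y := by
  obtain ⟨u, v, h⟩ := h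
  have h' : a = u * a * (x * v) := by simpa [mul_assoc] using h
  obtain ⟨y, hy⟩ := (FT_stab h').2
  exact ⟨v * y, by simpa [mul_assoc] using hy⟩

theorem FT_idem [Finite M] {p q : M} (hp : FT_jle p (p * q)) (hq : FT_jle q (p * q)) :
    ∃ e, e * e = e ∧ (∃ z, e = z * p) ∧ p * e = p ∧ (∃ s, e = q * s) ∧ e * q = q := by
  obtain ⟨s, hs⟩ := FT_stabR hp
  obtain ⟨n, hn⟩ := FT_idem_pow (q * s)
  have hpe : ∀ k, p * (q * s) ^ k = p := by
    intro k
    induction k with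
    | zero => simp
    | succ k ih => rw [pow_succ, ← mul_assoc, ih, ← mul_assoc]; exact hs.symm
  have he : (q * s) ^ (n + 1) = q * (s * (q * s) ^ n) := by rw [pow_succ', mul_assoc]
  generalize hE : (q * s) ^ (n + 1) = e at *
  have hpe' : p * e = p := by rw [← hE]; exact hpe _
  have hqp : FT_jle q p := FT_jle_trans hq (FT_jle_left _ _)
  refine ⟨e, hn, ?_, hpe', ⟨_, he⟩, ?_⟩
  · have : FT_jle e (p * e) := by
      rw [hpe']; rw [he]; exact FT_jle_trans (FT_jle_left _ _) hqp
    obtain ⟨y, hy⟩ := FT_stabL this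
    exact ⟨y, by rw [hpe'] at hy; exact hy⟩
  · have : FT_jle q (q * (s * (q * s) ^ n)) := by
      rw [← he]
      refine FT_jle_trans hqp ?_
      rw [← hpe']; exact FT_jle_right _ _
    obtain ⟨t, ht⟩ := FT_stabR this
    rw [← he] at ht
    rw [ht, ← mul_assoc, hn]

/-- types of cuts -/
theorem FT_types [Finite M] (Y : Set ℕ) (p q : ℕ → M) (σ : ℕ → ℕ → M) (E P : M)
    (hpσ : ∀ y ∈ Y, ∀ y' ∈ Y, y < y' → p y' = p y * σ y y')
    (hqσ : ∀ y ∈ Y, ∀ y' ∈ Y, y < y' → q y = σ y y' * q y')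
    (hpq : ∀ y ∈ Y, p y * q y = E)
    (hpE : ∀ y ∈ Y, FT_jle (p y) E) (hqE : ∀ y ∈ Y, FT_jle (q y) E)
    (hσE : ∀ y ∈ Y, ∀ y' ∈ Y, y < y' → FT_jle (σ y y') E)
    (hPE : FT_jle P E) (hP : ∀ y ∈ Y, ∃ t, p y = P * t) :
    ∃ τ : ℕ → M, (∀ y ∈ Y, FT_jle (τ y) E ∧ FT_jle E (τ y)) ∧
      ∀ c, ∃ e, e * e = e ∧ ∀ y ∈ Y, ∀ y' ∈ Y, y < y' → τ y = c → τ y' = c → σ y y' = e := by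
  have hEp : ∀ y ∈ Y, FT_jle E (p y) := fun y hy => by
    rw [← hpq y hy]; exact FT_jle_left _ _
  have hEq : ∀ y ∈ Y, FT_jle E (q y) := fun y hy => by
    rw [← hpq y hy]; exact FT_jle_right _ _
  have h1 : ∀ y, ∃ e, y ∈ Y → e * e = e ∧ (∃ z, e = z * p y) ∧ p y * e = p y ∧
      (∃ s, e = q y * s) ∧ e * q y = q y := by
    intro y
    by_cases hy : y ∈ Y
    · obtain ⟨e, he⟩ := FT_idem (p := p y) (q := q y) (by rw [hpq y hy]; exact hpE y hy)
        (by rw [hpq y hy]; exact hqE y hy)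
      exact ⟨e, fun _ => he⟩
    · exact ⟨1, fun h => absurd h hy⟩
  choose e he using h1
  have h2 : ∀ c, ∃ z w, ∀ y ∈ Y, e y = c → w * (z * p y) = p y ∧ ∃ t, z * p y = c * t := by
    intro c
    by_cases hc : ∃ y ∈ Y, e y = c
    · obtain ⟨y0, hy0, rfl⟩ := hc
      obtain ⟨hee, ⟨z, hz⟩, hpe, -, -⟩ := he y0 hy0
      refine ⟨z, p y0, ?_⟩
      intro y hy hey
      have : ∃ t, p y = p y0 * t := by
        obtain ⟨t, ht⟩ := hP y hy
        obtain ⟨t0, ht0⟩ := hP y0 hy0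
        have : FT_jle P (P * t0) := by rw [← ht0]; exact FT_jle_trans hPE (hEp y0 hy0)
        obtain ⟨t', ht'⟩ := FT_stabR this
        refine ⟨t' * t, ?_⟩
        rw [ht0, ← mul_assoc, ← ht', ht]
      obtain ⟨t, ht⟩ := this
      refine ⟨?_, t, ?_⟩
      · rw [ht, ← mul_assoc z, ← hz, ← mul_assoc, hpe]
      · rw [ht, ← mul_assoc, ← hz]
    · exact ⟨1, 1, fun y hy h => absurd ⟨y, hy, h⟩ hc⟩
  choose z w hzw using h2
  have hJ : ∀ y ∈ Y, FT_jle (z (e y) * p y) E ∧ FT_jle E (z (e y) * p y) := by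
    intro y hy
    refine ⟨FT_jle_trans (FT_jle_right _ _) (hpE y hy), FT_jle_trans (hEp y hy) ?_⟩
    have := FT_jle_right (w (e y)) (z (e y) * p y)
    rwa [(hzw _ y hy rfl).1] at this
  have hkey : ∀ y ∈ Y, ∀ y' ∈ Y, z (e y) * p y = z (e y') * p y' → e y' * e y = e y ∧ 
      e y' * e y = e y' := by
    intro y hy y' hy' hg
    obtain ⟨-, ⟨t, ht⟩⟩ := hzw _ y hy rfl
    obtain ⟨hw', ⟨t', ht'⟩⟩ := hzw _ y' hy' rfl
    obtain ⟨hee, ⟨x, hx⟩, hpe, hs, -⟩ := he y hy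
    obtain ⟨hee', ⟨x', hx'⟩, hpe', -, -⟩ := he y' hy'
    constructor
    · have : FT_jle (e y) (e y * t) := by
        rw [← ht]
        refine FT_jle_trans ?_ (hJ y hy).2
        rw [hx]; exact FT_jle_trans (FT_jle_right _ _) (hpE y hy)
      obtain ⟨r, hr⟩ := FT_stabR this
      rw [← ht, hg, ht'] at hr
      rw [hr]; simp only [← mul_assoc]; rw [hee']
    · have h3 : e y' = x' * w (e y') * (z (e y) * p y) := by
        rw [hg, mul_assoc, hw', ← hx']
      calc e y' * e y = x' * w (e y') * (z (e y) * p y) * e y := by rw [← h3]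
        _ = x' * w (e y') * (z (e y) * (p y * e y)) := by simp only [mul_assoc]
        _ = e y' := by rw [hpe, ← h3]
  refine ⟨fun y => z (e y) * p y, hJ, ?_⟩
  intro c
  by_cases hc : ∃ y ∈ Y, z (e y) * p y = c
  · obtain ⟨y0, hy0, hc⟩ := hc
    refine ⟨e y0, (he y0 hy0).1, ?_⟩
    have hsame : ∀ y ∈ Y, z (e y) * p y = c → e y = e y0 := by
      intro y hy h
      have := hkey y hy y0 hy0 (h.trans hc.symm)
      exact this.1.symm.trans this.2
    intro y hy y' hy' hlt h h'
    have e1 := hsame y hy h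
    have e2 := hsame y' hy' h'
    have hpp : p y = p y' := by
      have a1 := (hzw _ y hy rfl).1
      have a2 := (hzw _ y' hy' rfl).1
      simp only at h h'
      rw [← a1, ← a2, h, h', e1, e2]
    obtain ⟨hee, ⟨x, hx⟩, hpe, hs, heq⟩ := he y hy
    have h4 : e y * σ y y' = e y := by
      conv_lhs => rw [hx]
      rw [mul_assoc, ← hpσ y hy y' hy' hlt, ← hpp, ← hx]
    have h5 : FT_jle (σ y y') (σ y y' * q y') := by
      rw [← hqσ y hy y' hy' hlt]
      exact FT_jle_trans (hσE y hy y' hy' hlt) (hEq y hy)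
    obtain ⟨r, hr⟩ := FT_stabR h5
    rw [← hqσ y hy y' hy' hlt] at hr
    rw [← e1, ← h4, hr, ← mul_assoc, heq]
  · exact ⟨1, by simp, fun y hy _ _ _ h => absurd ⟨y, hy, h⟩ hc⟩

end alg

structure FT_Sys {M : Type} [Monoid M] (n : ℕ) (σ : ℕ → ℕ → M) (T : ℕ → ℕ → ℕ → Prop) : Prop where
  self : ∀ i, σ i i = 1
  mul : ∀ i j k, i ≤ j → j ≤ k → k ≤ n → σ i k = σ i j * σ j k
  ne : ∀ i j, i < j → j ≤ n → σ i j ≠ 1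
  mono : ∀ h h' i j, T h i j → h ≤ h' → T h' i j
  leaf : ∀ i, i < n → T 0 i (i + 1)
  bin : ∀ h i j k, i < j → j < k → k ≤ n → T h i j → T h j k → T (h + 1) i k
  idem : ∀ (h : ℕ) (e : M) (C : Set ℕ), e * e = e → (∀ a ∈ C, a ≤ n) →
    (∀ a ∈ C, ∀ b ∈ C, a < b → (∀ c ∈ C, ¬ (a < c ∧ c < b)) → T h a b ∧ σ a b = e) →
    ∀ a ∈ C, ∀ b ∈ C, a < b → T (h + 1) a b

section comb
variable {M : Type} [Monoid M] {n : ℕ} {σ : ℕ → ℕ → M} {T : ℕ → ℕ → ℕ → Prop}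

theorem FT_comb (hs : FT_Sys n σ T) (Y Z : Set ℕ) (hY : ∀ y ∈ Y, y ≤ n) (h : ℕ) (τ : ℕ → M)
    (hcons : ∀ a ∈ Y, ∀ b ∈ Y, a < b → (∀ c ∈ Y, ¬ (a < c ∧ c < b)) → T h a b)
    (hτ : ∀ c, ∃ e, e * e = e ∧ ∀ y ∈ Z, ∀ y' ∈ Z, y < y' → τ y = c → τ y' = c → σ y y' = e)
    (F : Finset M) : ∀ l ∈ Y, ∀ r ∈ Y, l < r → (∀ y ∈ Y, l < y → y < r → y ∈ Z ∧ τ y ∈ F) →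
      T (h + 3 * F.card) l r := by
  classical
  induction F using Finset.induction_on with
  | empty =>
    intro l hl r hr hlr hin
    apply hs.mono h _ _ _ _ (by simp)
    apply hcons l hl r hr hlr
    intro c hc hh
    simpa using (hin c hc hh.1 hh.2).2
  | insert c F hc ih =>
    intro l hl r hr hlr hin
    rw [Finset.card_insert_of_notMem hc]
    have hh : h + 3 * (F.card + 1) = h + 3 * F.card + 1 + 1 + 1 := by ring
    rw [hh]
    set C : Set ℕ := {y | y ∈ Y ∧ l < y ∧ y < r ∧ τ y = c} with hC
    have step : ∀ a ∈ Y, ∀ b ∈ Y, l ≤ a → b ≤ r → a < b → (∀ y ∈ C, ¬ (a < y ∧ y < b)) →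
        T (h + 3 * F.card) a b := by
      intro a ha b hb hla hbr hab hno
      apply ih a ha b hb hab
      intro y hy hay hyb
      obtain ⟨h1, h2⟩ := hin y hy (by omega) (by omega)
      refine ⟨h1, ?_⟩
      rcases Finset.mem_insert.1 h2 with h3 | h3
      · exact absurd ⟨hay, hyb⟩ (hno y ⟨hy, by omega, by omega, h3⟩)
      · exact h3
    by_cases hne : C.Nonempty
    · obtain ⟨a, ha, hamin⟩ : ∃ a ∈ C, ∀ y ∈ C, a ≤ y := 
        ⟨sInf C, Nat.sInf_mem hne, fun y hy => Nat.sInf_le hy⟩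
      have hfin : C.Finite := (Set.finite_Iio r).subset (fun y hy => hy.2.2.1)
      obtain ⟨b, hb, hbmax⟩ : ∃ b ∈ C, ∀ y ∈ C, y ≤ b := by
        obtain ⟨b, hb, hm⟩ := Set.exists_max_image C id hfin hne
        exact ⟨b, hb, hm⟩
      have hab : a ≤ b := hamin b hb
      obtain ⟨haY, hla, har, hta⟩ := ha
      obtain ⟨hbY, hlb, hbr, htb⟩ := hb
      have t1 : T (h + 3 * F.card) l a := step l hl a haY le_rfl har.le hla (by
        intro y hy hh; have := hamin y hy; omega)
      have t2 : T (h + 3 * F.card) b r := step b hbY r hr hlb.le le_rfl hbr (by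
        intro y hy hh; have := hbmax y hy; omega)
      have t3 : T (h + 3 * F.card + 1 + 1) l b := by
        rcases hab.eq_or_lt with rfl | hab
        · exact hs.mono _ _ _ _ t1 (by omega)
        · apply hs.bin _ l a b hla hab (hY b hbY) (hs.mono _ _ _ _ t1 (by omega))
          obtain ⟨e, hee, hσ⟩ := hτ c
          apply hs.idem _ e C hee (fun y hy => hY y hy.1) _ a ⟨haY, hla, har, hta⟩ b 
            ⟨hbY, hlb, hbr, htb⟩ hab
          intro x hx y hy hxy hno
          refine ⟨step x hx.1 y hy.1 hx.2.1.le hy.2.2.1.le hxy hno, ?_⟩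
          exact hσ x (hin x hx.1 hx.2.1 hx.2.2.1).1 y (hin y hy.1 hy.2.1 hy.2.2.1).1 hxy
            hx.2.2.2 hy.2.2.2
      exact hs.bin _ l b r hlb hbr (hY r hr) t3 (hs.mono _ _ _ _ t2 (by omega))
    · apply hs.mono _ _ _ _ (step l hl r hr le_rfl le_rfl hlr _) (by omega)
      intro y hy
      exact absurd ⟨y, hy⟩ hne

/-- greedy cuts -/
theorem FT_greedy (r : ℕ) (Q : ℕ → ℕ → Prop)
    (hQ : ∀ i j j', i < j → j ≤ j' → j' ≤ r → Q i j → Q i j') (x : ℕ) (hx : x ≤ r) :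
    ∃ Y : Set ℕ, x ∈ Y ∧ (∀ y ∈ Y, x ≤ y ∧ y ≤ r) ∧
      (∀ y ∈ Y, ∀ y' ∈ Y, y < y' → Q y y') ∧
      (∀ y ∈ Y, ∀ z, y < z → z ≤ r → (∀ w ∈ Y, ¬ (y < w ∧ w ≤ z)) → ¬ Q y z) := by
  classical
  induction hd : r - x using Nat.strong_induction_on generalizing x with
  | _ d ih =>
  by_cases hex : ∃ y, x < y ∧ y ≤ r ∧ Q x y
  · obtain ⟨h1, h2, h3⟩ := Nat.find_spec hex
    have hmin := fun m => Nat.find_min hex (m := m)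
    generalize Nat.find hex = x' at *
    obtain ⟨Y, hxY, hY1, hY2, hY3⟩ := ih (r - x') (by omega) x' h2 rfl
    refine ⟨insert x Y, Set.mem_insert _ _, ?_, ?_, ?_⟩
    · rintro y (rfl | hy)
      · exact ⟨le_rfl, hx⟩
      · have := hY1 y hy; omega
    · rintro y (rfl | hy) y' (rfl | hy') hlt
      · omega
      · exact hQ _ x' _ h1 (hY1 y' hy').1 (hY1 y' hy').2 h3
      · have := hY1 y hy; omega
      · exact hY2 y hy y' hy' hlt
    · rintro y (rfl | hy) z hz hzr hno hq
      · have := hno x' (Or.inr hxY)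
        exact hmin z (by omega) ⟨hz, hzr, hq⟩
      · exact hY3 y hy z hz hzr (fun w hw => hno w (Or.inr hw)) hq
  · refine ⟨{x}, rfl, ?_, ?_, ?_⟩
    · rintro y rfl; exact ⟨le_rfl, hx⟩
    · rintro y rfl y' rfl h; omega
    · rintro y rfl z hz hzr - hq
      exact hex ⟨z, hz, hzr, hq⟩

open Classical in
theorem FT_main [Fintype M] (h1 : ∀ x y : M, x * y = 1 → x = 1 ∧ y = 1) (hs : FT_Sys n σ T)
    (l r : ℕ) (hlr : l < r) (hl : 1 ≤ l) (hr : r + 1 ≤ n) :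
    T (3 * (Finset.univ.filter (fun m : M => m ≠ 1 ∧ FT_jle (σ l r) m)).card) (l - 1) (r + 1) := by
  induction hd : r - l using Nat.strong_induction_on generalizing l r with
  | _ d ih =>
  set a := σ l r with ha
  have ha1 : a ≠ 1 := hs.ne l r hlr (by omega)
  set N := Finset.univ.filter (fun m : M => m ≠ 1 ∧ FT_jle a m ∧ ¬ FT_jle m a) with hN
  set J := Finset.univ.filter (fun m : M => m ≠ 1 ∧ FT_jle a m ∧ FT_jle m a) with hJ
  have hcard : (Finset.univ.filter (fun m : M => m ≠ 1 ∧ FT_jle a m)).card = N.card + J.card := by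
    rw [← Finset.card_union_of_disjoint]
    · congr 1; ext m; simp [hN, hJ]; tauto
    · rw [Finset.disjoint_left]; intro m; simp [hN, hJ]; tauto
  rw [hcard, mul_add]
  have hJ1 : 1 ≤ J.card := Finset.card_pos.2 ⟨a, by simp [hJ, ha1, FT_jle_refl]⟩
  -- factors
  have hfac : ∀ i j i' j', i' ≤ i → i ≤ j → j ≤ j' → j' ≤ n → FT_jle (σ i' j') (σ i j) := by
    intro i j i' j' hi hij hj hj'
    rw [hs.mul i' i j' hi (by omega) hj', hs.mul i j j' hij hj hj']
    exact ⟨σ i' i, σ j j', by simp [mul_assoc]⟩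
  -- pieces
  have hpiece : ∀ x z, l ≤ x → x < z → z ≤ r + 1 →
      (x < z - 1 → ¬ FT_jle (σ x (z - 1)) a) → T (3 * N.card) x z := by
    intro x z hx hxz hz hq
    rcases Nat.lt_or_ge (x + 1) z with h | h
    · have hq := hq (by omega)
      rcases Nat.lt_or_ge (x + 2) z with h' | h'
      · have := ih (z - 1 - (x + 1)) (by omega) (x + 1) (z - 1) (by omega) (by omega) (by omega) rfl
        rw [show x + 1 - 1 = x by omega, show z - 1 + 1 = z by omega] at this
        refine hs.mono _ _ _ _ this (Nat.mul_le_mul_left 3 (Finset.card_le_card ?_))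
        intro m hm
        simp only [Finset.mem_filter, Finset.mem_univ, true_and, hN] at hm ⊢
        refine ⟨hm.1, FT_jle_trans (hfac _ _ _ _ (by omega) (by omega) (by omega) (by omega)) hm.2, ?_⟩
        intro hma
        apply hq
        refine FT_jle_trans ?_ (FT_jle_trans hm.2 hma)
        exact hfac _ _ _ _ (by omega) (by omega) (by omega) (by omega)
      · obtain rfl : z = x + 2 := by omega
        have hN1 : 1 ≤ N.card := Finset.card_pos.2 ⟨σ x (x + 1), by
          simp only [Finset.mem_filter, Finset.mem_univ, true_and, hN]
          exact ⟨hs.ne _ _ (by omega) (by omega),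
            hfac _ _ _ _ (by omega) (by omega) (by omega) (by omega), hq⟩⟩
        have := hs.bin 0 x (x + 1) (x + 2) (by omega) (by omega) (by omega)
          (hs.leaf _ (by omega)) (hs.leaf _ (by omega))
        exact hs.mono _ _ _ _ this (by omega)
    · obtain rfl : z = x + 1 := by omega
      exact hs.mono _ _ _ _ (hs.leaf _ (by omega)) (by omega)
  obtain ⟨Y, hlY, hY1, hY2, hY3⟩ := FT_greedy r (fun i j => FT_jle (σ i j) a) (by
    intro i j j' hij hjj' hj' hq
    exact FT_jle_trans (hfac _ _ _ _ le_rfl hij.le hjj' (by omega)) hq) l hlr.le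
  have hfinY : Y.Finite := (Set.finite_Iic r).subset (fun y hy => (hY1 y hy).2)
  obtain ⟨xn, hxn, hmax⟩ : ∃ b ∈ Y, ∀ y ∈ Y, y ≤ b := by
    obtain ⟨b, hb, hm⟩ := Set.exists_max_image Y id hfinY ⟨l, hlY⟩
    exact ⟨b, hb, hm⟩
  have hlxn : l < xn := by
    by_contra hcon
    refine hY3 l hlY r hlr le_rfl ?_ (FT_jle_refl _)
    intro w hw hh
    have := hmax w hw
    omega
  have hxr := (hY1 xn hxn).2
  have tfirst : T (3 * N.card) (l - 1) l := by
    have := hs.leaf (l - 1) (by omega)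
    rw [show l - 1 + 1 = l by omega] at this
    exact hs.mono _ _ _ _ this (by omega)
  have hgap : ∀ x ∈ Y, ∀ z, x < z → z ≤ r + 1 → (∀ c ∈ Y, ¬ (x < c ∧ c < z)) →
      T (3 * N.card) x z := by
    intro x hx z hxz hz hno
    apply hpiece x z (hY1 x hx).1 hxz hz
    intro hlt
    apply hY3 x hx _ hlt (by omega)
    intro w hw hh
    exact hno w hw ⟨hh.1, by omega⟩
  by_cases hmid : ∃ y ∈ Y, l < y ∧ y < xn
  · obtain ⟨y1, hy1, hly1, hy1x⟩ := hmid
    have hbc := hs.mul l y1 xn hly1.le hy1x.le (by omega)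
    have hb := hY2 l hlY y1 hy1 hly1
    have hc := hY2 y1 hy1 xn hxn hy1x
    have habc : FT_jle a (σ l y1 * σ y1 xn) := by
      rw [← hbc]; exact hfac _ _ _ _ le_rfl hlxn.le hxr (by omega)
    obtain ⟨e, hee, ⟨z, hz⟩, hbe, ⟨s, hs'⟩, hec⟩ := FT_idem (p := σ l y1) (q := σ y1 xn)
      (FT_jle_trans hb habc) (FT_jle_trans hc habc)
    have hae : FT_jle a e := by
      refine FT_jle_trans habc (FT_jle_trans (FT_jle_left _ _) ?_)
      rw [← hbe]; exact FT_jle_right _ _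
    have hea : FT_jle e a := by
      refine FT_jle_trans ?_ hc
      rw [hs']; exact FT_jle_left _ _
    have hPb : e * z * σ l y1 = e := by rw [mul_assoc, ← hz, hee]
    have hcQ : σ y1 xn * (s * e) = e := by rw [← mul_assoc, ← hs', hee]
    obtain ⟨τ, hτJ, hτ⟩ := FT_types Y (fun y => e * z * σ l y) (fun y => σ y xn * (s * e)) σ e (e * z)
      (by
        intro y hy y' hy' hlt
        rw [hs.mul l y y' (hY1 y hy).1 hlt.le (by have := hY1 y' hy'; omega), ← mul_assoc])
      (by
        intro y hy y' hy' hlt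
        rw [hs.mul y y' xn hlt.le (hmax y' hy') (by omega), mul_assoc])
      (by
        intro y hy
        calc e * z * σ l y * (σ y xn * (s * e)) = e * z * (σ l y * σ y xn) * (s * e) := by
              simp only [mul_assoc]
          _ = (e * z * σ l y1) * (σ y1 xn * (s * e)) := by
              rw [← hs.mul l y xn (hY1 y hy).1 (hmax y hy) (by omega), hbc]; simp only [mul_assoc]
          _ = e := by rw [hPb, hcQ, hee])
      (by
        intro y hy
        exact FT_jle_trans (FT_jle_left _ _) (FT_jle_left _ _))
      (by
        intro y hy
        exact FT_jle_trans (FT_jle_right _ _) (FT_jle_right _ _))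
      (by
        intro y hy y' hy' hlt
        exact FT_jle_trans (hY2 y hy y' hy' hlt) hae)
      (FT_jle_left _ _)
      (fun y _ => ⟨_, rfl⟩)
    refine FT_comb hs (insert (l - 1) (insert (r + 1) Y)) Y ?_ (3 * N.card) τ ?_ hτ J (l - 1)
      (by simp) (r + 1) (by simp) (by omega) ?_
    · rintro y (rfl | rfl | hy)
      · omega
      · omega
      · have := hY1 y hy; omega
    · rintro x (rfl | rfl | hx) y hy hxy hno
      · have hyl : y ≤ l := by
          by_contra hcon
          exact hno l (by simp [hlY]) ⟨by omega, by omega⟩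
        obtain rfl : y = l := by omega
        exact tfirst
      · rcases hy with rfl | rfl | hy
        · omega
        · omega
        · have := hY1 y hy; omega
      · apply hgap x hx y hxy
        · rcases hy with rfl | rfl | hy
          · omega
          · omega
          · have := hY1 y hy; omega
        · intro c hc
          exact hno c (by simp [hc])
    · rintro y (rfl | rfl | hy) hy1 hy2
      · omega
      · omega
      · refine ⟨hy, ?_⟩
        simp only [Finset.mem_filter, Finset.mem_univ, true_and, hJ]
        have hta := FT_jle_trans (hτJ y hy).1 hea
        refine ⟨?_, FT_jle_trans hae (hτJ y hy).2, hta⟩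
        intro h
        rw [h] at hta
        obtain ⟨u, v, huv⟩ := hta
        exact ha1 (h1 _ _ (h1 _ _ huv.symm).1).2
  · have t2 := hgap l hlY xn hlxn (by omega) (fun c hc hh => hmid ⟨c, hc, hh⟩)
    have t3 := hgap xn hxn (r + 1) (by omega) le_rfl (fun c hc hh => by
      have := hmax c hc; omega)
    have t4 := hs.bin _ _ _ _ (by omega) (by omega) (by omega) tfirst t2
    have t5 := hs.bin _ _ _ _ (by omega) (by omega) (by omega) t4 (hs.mono _ _ _ _ t3 (Nat.le_succ _))
    exact hs.mono _ _ _ _ t5 (by omega)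

end comb

theorem FT_attach_map {α β : Type} (l : List α) (f : α → β) :
    l.attach.map (fun t => f t.1) = l.map f := by
  simp

theorem FT_yield_node {A : Type} (ts : List (FTree A)) :
    (FTree.node ts).yield = (ts.map FTree.yield).flatten := by
  rw [FTree.yield, FT_attach_map ts FTree.yield]

theorem FT_height_node {A : Type} (ts : List (FTree A)) (h : ℕ) (hh : ∀ t ∈ ts, t.height ≤ h) :
    (FTree.node ts).height ≤ h + 1 := by
  rw [FTree.height, FT_attach_map ts FTree.height]
  apply Nat.succ_le_succ
  induction ts with
  | nil => simp
  | cons t ts ih =>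
    simp only [List.map_cons, List.foldr_cons]
    exact max_le (hh t (by simp)) (ih (fun t ht => hh t (by simp [ht])))

def FT_seg {A : Type} (u : List A) (i j : ℕ) : List A := (u.drop i).take (j - i)

theorem FT_seg_append {A : Type} (u : List A) (i j k : ℕ) (hij : i ≤ j) (hjk : j ≤ k) :
    FT_seg u i j ++ FT_seg u j k = FT_seg u i k := by
  unfold FT_seg
  obtain ⟨a, rfl⟩ := Nat.exists_eq_add_of_le hij
  obtain ⟨b, rfl⟩ := Nat.exists_eq_add_of_le hjk
  rw [show i + a + b - i = a + b by omega, List.take_add, List.drop_drop]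
  simp

theorem FT_seg_ne {A : Type} (u : List A) (i j : ℕ) (hij : i < j) (hj : j ≤ u.length) :
    FT_seg u i j ≠ [] := by
  intro h
  have := congrArg List.length h
  simp [FT_seg] at this
  omega

open Classical in
noncomputable def FT_sigma {A S : Type} [Semigroup S] (φ : List A → S) (u : List A) (i j : ℕ) :
    WithOne S := if i < j then (φ (FT_seg u i j) : WithOne S) else 1

def FT_T {A S : Type} [Semigroup S] (φ : List A → S) (u : List A) (h i j : ℕ) : Prop :=
  ∃ t : FTree A, t.yield = FT_seg u i j ∧ FTree.Ramseyan φ t ∧ t.height ≤ h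

theorem FT_sys {A S : Type} [Semigroup S] (φ : List A → S)
    (hφ : ∀ u v : List A, u ≠ [] → v ≠ [] → φ (u ++ v) = φ u * φ v) (u : List A) :
    FT_Sys u.length (FT_sigma φ u) (FT_T φ u) where
  self := by intro i; simp [FT_sigma]
  mul := by
    intro i j k hij hjk hk
    rcases hij.eq_or_lt with rfl | hij
    · simp [FT_sigma]
    rcases hjk.eq_or_lt with rfl | hjk
    · simp [FT_sigma]
    rw [FT_sigma, FT_sigma, FT_sigma, if_pos hij, if_pos hjk, if_pos (hij.trans hjk),
      ← WithOne.coe_mul, ← hφ _ _ (FT_seg_ne u i j hij (by omega)) (FT_seg_ne u j k hjk hk),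
      FT_seg_append u i j k hij.le hjk.le]
  ne := by
    intro i j hij _
    rw [FT_sigma, if_pos hij]
    exact WithOne.coe_ne_one
  mono := by
    rintro h h' i j ⟨t, h1, h2, h3⟩ hh
    exact ⟨t, h1, h2, h3.trans hh⟩
  leaf := by
    intro i hi
    refine ⟨.leaf u[i], ?_, .leaf _, by simp [FTree.height]⟩
    rw [FTree.yield, FT_seg, List.drop_eq_getElem_cons hi, show i + 1 - i = 1 by omega]
    rfl
  bin := by
    rintro h i j k hij hjk hk ⟨t, h1, h2, h3⟩ ⟨t', h1', h2', h3'⟩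
    refine ⟨.node [t, t'], ?_, .node _ (by simp [h2, h2']) (Or.inl rfl), 
      FT_height_node _ _ (by simp [h3, h3'])⟩
    rw [FT_yield_node]
    simp [h1, h1', FT_seg_append u i j k hij.le hjk.le]
  idem := by
    intro h e C hee hCn hC a ha b hb hab
    have key : ∀ d a, a ∈ C → ∀ b ∈ C, a < b → b - a = d → ∃ ts : List (FTree A), 
        (ts.map FTree.yield).flatten = FT_seg u a b ∧ 
        ∀ t ∈ ts, FTree.Ramseyan φ t ∧ t.height ≤ h ∧ (φ t.yield : WithOne S) = e := by
      intro d
      induction d using Nat.strong_induction_on with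
      | _ d ih =>
      intro a ha b hb hab hd
      by_cases hm : ∃ c ∈ C, a < c ∧ c < b
      · obtain ⟨c, hc, hac, hcb⟩ := hm
        obtain ⟨ts, h1, h2⟩ := ih (c - a) (by omega) a ha c hc hac rfl
        obtain ⟨ts', h1', h2'⟩ := ih (b - c) (by omega) c hc b hb hcb rfl
        refine ⟨ts ++ ts', ?_, ?_⟩
        · rw [List.map_append, List.flatten_append, h1, h1', FT_seg_append u _ _ _ hac.le hcb.le]
        · intro t ht
          rcases List.mem_append.1 ht with ht | ht
          · exact h2 t ht
          · exact h2' t ht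
      · obtain ⟨⟨t, h1, h2, h3⟩, h4⟩ := hC a ha b hb hab (fun c hc hh => hm ⟨c, hc, hh⟩)
        refine ⟨[t], by simp [h1], ?_⟩
        intro t' ht'
        obtain rfl : t' = t := by simpa using ht'
        refine ⟨h2, h3, ?_⟩
        rw [FT_sigma, if_pos hab] at h4
        rw [h1, h4]
    obtain ⟨ts, h1, h2⟩ := key _ a ha b hb hab rfl
    have hne : ts ≠ [] := by
      rintro rfl
      exact FT_seg_ne u a b hab (hCn b hb) (by simpa using h1.symm)
    obtain ⟨t0, ht0⟩ := List.exists_mem_of_ne_nil ts hne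
    have he0 := (h2 t0 ht0).2.2
    refine ⟨.node ts, by rw [FT_yield_node, h1], .node ts (fun t ht => (h2 t ht).1) (Or.inr ?_),
      FT_height_node ts h (fun t ht => (h2 t ht).2.1)⟩
    refine ⟨φ t0.yield, ?_, ?_⟩
    · rw [← he0, ← WithOne.coe_mul] at hee
      exact WithOne.coe_inj.1 hee
    · intro t ht
      exact WithOne.coe_inj.1 ((h2 t ht).2.2.trans he0.symm)

theorem factorisation_tree_exists {A S : Type} [Semigroup S] [Fintype S]
    (φ : List A → S)
    (hφ : ∀ u v : List A, u ≠ [] → v ≠ [] → φ (u ++ v) = φ u * φ v)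
    (u : List A) (hu : u ≠ []) :
    ∃ t : FTree A, t.yield = u ∧ FTree.Ramseyan φ t ∧ t.height ≤ 3 * Fintype.card S := by
  classical
  have hs := FT_sys φ hφ u
  have hlen : 0 < u.length := List.length_pos_iff.2 hu
  have hcard : 0 < Fintype.card S := Fintype.card_pos_iff.2 ⟨φ u⟩
  suffices h : FT_T φ u (3 * Fintype.card S) 0 u.length by
    obtain ⟨t, h1, h2, h3⟩ := h
    exact ⟨t, by simpa [FT_seg] using h1, h2, h3⟩
  rcases Nat.lt_or_ge u.length 3 with h3 | h3
  · rcases Nat.lt_or_ge u.length 2 with h2 | h2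
    · have h := hs.leaf 0 hlen
      rw [show u.length = 0 + 1 by omega]
      exact hs.mono _ _ _ _ h (by omega)
    · have h := hs.bin 0 0 1 2 (by omega) (by omega) h2 (hs.leaf 0 hlen) (hs.leaf 1 (by omega))
      rw [show u.length = 2 by omega]
      exact hs.mono _ _ _ _ h (by omega)
  · let _ : Fintype (WithOne S) := inferInstanceAs (Fintype (Option S))
    have h := FT_main (M := WithOne S) (by
      intro x y h
      by_cases hx : x = 1
      · subst hx; simpa using h
      by_cases hy : y = 1
      · subst hy; simpa using h
      obtain ⟨x, rfl⟩ := WithOne.ne_one_iff_exists.1 hx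
      obtain ⟨y, rfl⟩ := WithOne.ne_one_iff_exists.1 hy
      rw [← WithOne.coe_mul] at h
      exact absurd h WithOne.coe_ne_one) hs 1 (u.length - 1) (by omega) le_rfl (by omega)
    rw [show u.length - 1 + 1 = u.length by omega] at h
    refine hs.mono _ _ _ _ h (Nat.mul_le_mul_left 3 ?_)
    have : (Finset.univ.image (fun s : S => (s : WithOne S))).card ≤ Fintype.card S :=
      Finset.card_image_le
    refine (Finset.card_le_card ?_).trans this
    intro m hm
    simp only [Finset.mem_filter] at hm
    obtain ⟨s, hs⟩ := WithOne.ne_one_iff_exists.1 hm.2.1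
    exact Finset.mem_image.2 ⟨s, Finset.mem_univ _, hs⟩
end

section
/- Let S be a finite semigroup, α an ordinal, and σ an additive labelling from α to S. Then there exists a forward ramseyan split of (α,σ) of height at most |S|. Moreover the split can be chosen deterministically: there is an assignment (α,σ) ↦ s_{α,σ} such that for additive labellings σ, σ' over ordinals α, α' and any β < min(α,α'), if σ restricted to [0,β] equals σ' restricted to [0,β], then s_{α,σ}(β) = s_{α',σ'}(β). -/
open Ordinal

/-- `σ` is an additive labelling over the ordinal `α` (its values are relevant
only on pairs of ordinals below `α`). -/
def AdditiveOn {S : Type} [Semigroup S] (α : Ordinal) (σ : Ordinal → Ordinal → S) : Prop :=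
  ∀ x y z : Ordinal, x < y → y < z → z < α → σ x y * σ y z = σ x z

/-- `x` and `y` are `k`-neighbours (below `α`) for the split `s`. -/
def KNeighboursOn (α : Ordinal) (s : Ordinal → ℕ) (k : ℕ) (x y : Ordinal) : Prop :=
  x < α ∧ y < α ∧ s x = k ∧ s y = k ∧ ∀ z, min x y ≤ z → z ≤ max x y → k ≤ s z

/-- A split is forward ramseyan: for pairwise `k`-neighbours `x < y` and
`x' < y'`, `σ(x,y) = σ(x,y)·σ(x',y')`. -/
def ForwardRamseyan {S : Type} [Semigroup S] (α : Ordinal)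
    (σ : Ordinal → Ordinal → S) (s : Ordinal → ℕ) : Prop :=
  ∀ k : ℕ, ∀ x y x' y' : Ordinal, x < y → x' < y' →
    (∀ a ∈ ({x, y, x', y'} : Set Ordinal), ∀ b ∈ ({x, y, x', y'} : Set Ordinal),
      KNeighboursOn α s k a b) →
    σ x y = σ x y * σ x' y'

section helpers

/-- size of the left ideal generated by `a` -/
noncomputable def lrank {S : Type} [Semigroup S] (a : S) : ℕ :=
  Set.ncard {b : S | b = a ∨ ∃ c, b = c * a}

theorem lrank_mul_right {S : Type} [Semigroup S] [Finite S] (x y : S) :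
    lrank (x * y) ≤ lrank y := by
  apply Set.ncard_le_ncard _ (Set.toFinite _)
  rintro b (rfl | ⟨c, rfl⟩)
  · exact Or.inr ⟨x, rfl⟩
  · exact Or.inr ⟨c * x, by rw [mul_assoc]⟩

theorem lrank_mul_left {S : Type} [Semigroup S] [Finite S] (x y : S) :
    lrank (x * y) ≤ lrank x := by
  have h : {b : S | b = x * y ∨ ∃ c, b = c * (x * y)} ⊆
      (fun t => t * y) '' {b : S | b = x ∨ ∃ c, b = c * x} := by
    rintro b (rfl | ⟨c, rfl⟩)
    · exact ⟨x, Or.inl rfl, rfl⟩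
    · exact ⟨c * x, Or.inr ⟨c, rfl⟩, by simp [mul_assoc]⟩
  exact (Set.ncard_le_ncard h (Set.toFinite _)).trans (Set.ncard_image_le (Set.toFinite _))

theorem lrank_pos {S : Type} [Semigroup S] [Finite S] (x : S) : 0 < lrank x :=
  (Set.ncard_pos (Set.toFinite _)).2 ⟨x, Or.inl rfl⟩

theorem lrank_le {S : Type} [Semigroup S] [Finite S] (x : S) : lrank x ≤ Nat.card S := by
  rw [← Set.ncard_univ]
  exact Set.ncard_le_ncard (Set.subset_univ _) (Set.toFinite _)

theorem absorb {S : Type} [Semigroup S] [Finite S] {a u v : S} (hu : a * u = a)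
    (hv : a * v = a) (h : lrank u ≤ lrank a) : u = u * v := by
  have hsub : {b : S | b = a ∨ ∃ c, b = c * a} ⊆ {b : S | b = u ∨ ∃ c, b = c * u} := by
    rintro b (rfl | ⟨c, rfl⟩)
    · exact Or.inr ⟨b, hu.symm⟩
    · exact Or.inr ⟨c * a, by rw [mul_assoc, hu]⟩
  have heq := Set.eq_of_subset_of_ncard_le hsub h (Set.toFinite _)
  have hm : u ∈ {b : S | b = a ∨ ∃ c, b = c * a} := by rw [heq]; exact Or.inl rfl
  rcases hm with rfl | ⟨c, rfl⟩
  · exact hv.symm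
  · rw [mul_assoc, hv]

theorem exists_numbering (S : Type) [Fintype S] (r : S → ℕ) :
    ∃ ρ : S → ℕ, Function.Injective ρ ∧ (∀ a, 1 ≤ ρ a ∧ ρ a ≤ Fintype.card S) ∧
      ∀ a b, ρ a ≤ ρ b → r a ≤ r b := by
  classical
  let key : S → ℕ ×ₗ Fin (Fintype.card S) := fun a => toLex (r a, Fintype.equivFin S a)
  let ρ : S → ℕ := fun a => (Finset.univ.filter (fun b => key b ≤ key a)).card
  have hlt : ∀ a b, key a < key b → ρ a < ρ b := by
    intro a b h
    apply Finset.card_lt_card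
    rw [Finset.ssubset_iff_of_subset]
    · exact ⟨b, by simp, by simpa using h⟩
    · intro c hc
      simp only [Finset.mem_filter, Finset.mem_univ, true_and] at hc ⊢
      exact hc.trans h.le
  have hinj : Function.Injective key := by
    intro a b h
    have := congrArg (fun p => (ofLex p).2) h
    simpa [key] using this
  refine ⟨ρ, ?_, ?_, ?_⟩
  · intro a b h
    rcases lt_trichotomy (key a) (key b) with h1 | h1 | h1
    · exact absurd h (hlt _ _ h1).ne
    · exact hinj h1
    · exact absurd h (hlt _ _ h1).ne'
  · intro a
    constructor
    · exact Finset.card_pos.2 ⟨a, by simp⟩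
    · exact Finset.card_le_univ _
  · intro a b h
    by_contra hc
    push Not at hc
    have : key b < key a := by
      rw [Prod.Lex.lt_iff]
      exact Or.inl hc
    exact absurd (hlt _ _ this) (by omega)

variable {P : Type*} [LinearOrder P] [WellFoundedLT P] {S : Type}

/-- the level of a position -/
noncomputable def lev (r : S → ℕ) (τ : P → P → S) : P → ℕ :=
  WellFounded.fix (C := fun _ => ℕ) (wellFounded_lt (α := P)) (fun β ih =>
    sInf {n | ∀ z (hz : z < β), ih z hz ≤ n →
      (∀ w (hw : w < β), z < w → n ≤ ih w hw) → r (τ z β) ≤ n})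

/-- the closing condition for level `n` at `β` -/
def LevCond (r : S → ℕ) (τ : P → P → S) (β : P) (n : ℕ) : Prop :=
  ∀ z, z < β → lev r τ z ≤ n → (∀ w, w < β → z < w → n ≤ lev r τ w) → r (τ z β) ≤ n

theorem lev_eq (r : S → ℕ) (τ : P → P → S) (β : P) :
    lev r τ β = sInf {n | LevCond r τ β n} := by
  unfold lev
  rw [WellFounded.fix_eq]
  rfl

theorem lev_cond (r : S → ℕ) (N : ℕ) (hN : ∀ a, r a ≤ N) (τ : P → P → S) (β : P) :
    LevCond r τ β (lev r τ β) := by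
  have h : (lev r τ β) ∈ {n | LevCond r τ β n} := by
    rw [lev_eq]
    exact Nat.sInf_mem ⟨N, fun _ _ _ _ => hN _⟩
  exact h

theorem lev_not_cond (r : S → ℕ) (τ : P → P → S) (β : P) (m : ℕ) (hm : m < lev r τ β) :
    ¬ LevCond r τ β m := by
  rw [lev_eq] at hm
  exact Nat.notMem_of_lt_sInf hm

theorem lev_congr (r : S → ℕ) (τ τ' : P → P → S) (β : P)
    (h : ∀ x y, x < y → y ≤ β → τ x y = τ' x y) : ∀ b ≤ β, lev r τ b = lev r τ' b := by
  intro b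
  induction b using WellFoundedLT.induction with
  | ind b ih =>
    intro hb
    rw [lev_eq, lev_eq]
    congr 1
    ext n
    simp only [Set.mem_ofPred_eq, LevCond]
    refine forall_congr' fun z => forall_congr' fun hz => ?_
    rw [ih z hz (hz.le.trans hb), h z b hz hb]
    refine imp_congr_right fun _ => imp_congr_left ?_
    refine forall_congr' fun w => forall_congr' fun hw => ?_
    rw [ih w hw (hw.le.trans hb)]

/-- `c` is the last position before `β` of level smaller than that of `β` -/
def IsBase (r : S → ℕ) (τ : P → P → S) (β c : P) : Prop :=
  c < β ∧ lev r τ c < lev r τ β ∧ ∀ w, c < w → w < β → lev r τ β ≤ lev r τ w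

theorem IsBase.unique {r : S → ℕ} {τ : P → P → S} {β c d : P} (hc : IsBase r τ β c)
    (hd : IsBase r τ β d) : c = d := by
  rcases lt_trichotomy c d with h | h | h
  · have := hc.2.2 d h hd.1
    have := hd.2.1
    omega
  · exact h
  · have := hd.2.2 c h hc.1
    have := hc.2.1
    omega

theorem lev_pos (r : S → ℕ) (N : ℕ) (hN : ∀ a, r a ≤ N) (hr : ∀ a, 0 < r a)
    (τ : P → P → S) (z β : P) (hz : z < β) : 0 < lev r τ β := by
  induction z using WellFoundedLT.induction with
  | ind z ih =>
    by_contra h0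
    by_cases hz0 : lev r τ z = 0
    · have := lev_cond r N hN τ β z hz (by omega) (fun w _ _ => by omega)
      have := hr (τ z β)
      omega
    · have := lev_not_cond r τ z 0 (by omega)
      unfold LevCond at this
      push Not at this
      obtain ⟨z', h1, -⟩ := this
      exact h0 (ih z' h1 (h1.trans hz))

theorem exists_base [Mul S] (r : S → ℕ) (N : ℕ) (hN : ∀ a, r a ≤ N) (hr : ∀ a, 0 < r a)
    (hl : ∀ a b, r (a * b) ≤ r a)
    (τ : P → P → S) (z₀ β : P) (hz₀ : z₀ < β)
    (hadd : ∀ x y z, x < y → y < z → z ≤ β → τ x y * τ y z = τ x z) :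
    ∃ c, IsBase r τ β c := by
  have hpos := lev_pos r N hN hr τ z₀ β hz₀
  obtain ⟨m, hm⟩ : ∃ m, lev r τ β = m + 1 := ⟨lev r τ β - 1, by omega⟩
  have hf := lev_not_cond r τ β m (by omega)
  unfold LevCond at hf
  push Not at hf
  obtain ⟨z, hz, hzm, hzw, -⟩ := hf
  let A : Set P := {c | z ≤ c ∧ ∀ w, c < w → w < β → m < lev r τ w}
  have hA : A.Nonempty := ⟨β, hz.le, fun w h1 h2 => absurd h1 h2.not_gt⟩
  obtain ⟨c, ⟨hzc, hcw⟩, hmin⟩ := (wellFounded_lt (α := P)).has_min A hA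
  have hcβ : c ≤ β := by
    by_contra h
    exact hmin β ⟨hz.le, fun w h1 h2 => absurd h1 h2.not_gt⟩ (not_le.1 h)
  have hcm : lev r τ c ≤ m := by
    rcases hzc.eq_or_lt with rfl | hzc
    · exact hzm
    by_contra hcm
    have hf := lev_not_cond r τ c m (by omega)
    unfold LevCond at hf
    push Not at hf
    obtain ⟨z', hz', hzm', hzw', hr'⟩ := hf
    have hmx : max z z' < c := max_lt hzc hz'
    have hnot : max z z' ∉ A := fun h => hmin _ h hmx
    have : ∃ w, max z z' < w ∧ w < β ∧ lev r τ w ≤ m := by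
      by_contra hcon
      push Not at hcon
      exact hnot ⟨le_max_left _ _, hcon⟩
    obtain ⟨w, hw1, hw2, hw3⟩ := this
    have hwc : w < c := by
      rcases lt_trichotomy w c with h | h | h
      · exact h
      · subst h; exact absurd hw3 hcm
      · have := hcw w h hw2
        omega
    have hz'w : z' < w := (le_max_right _ _).trans_lt hw1
    have hwm : lev r τ w = m := le_antisymm hw3 (hzw' w hwc hz'w)
    have h1 := lev_cond r N hN τ w z' hz'w (by omega)
      (fun v hv hv' => by rw [hwm]; exact hzw' v (hv.trans hwc) hv')
    have h2 := hl (τ z' w) (τ w c)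
    rw [hadd z' w c hz'w hwc hcβ] at h2
    omega
  have hcβ' : c < β := by
    rcases hcβ.eq_or_lt with h | h
    · subst h; omega
    · exact h
  exact ⟨c, hcβ', by omega, fun w h1 h2 => by have := hcw w h1 h2; omega⟩

theorem base_rank [Mul S] (r : S → ℕ) (N : ℕ) (hN : ∀ a, r a ≤ N)
    (hrr : ∀ a b, r (a * b) ≤ r b)
    (τ : P → P → S) (c β : P)
    (hadd : ∀ x y z, x < y → y < z → z ≤ β → τ x y * τ y z = τ x z)
    (hc : IsBase r τ β c) : r (τ c β) = lev r τ β := by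
  obtain ⟨h1, h2, h3⟩ := hc
  apply le_antisymm
  · exact lev_cond r N hN τ β c h1 h2.le (fun w hw hw' => h3 w hw' hw)
  · obtain ⟨m, hm⟩ : ∃ m, lev r τ β = m + 1 := ⟨lev r τ β - 1, by omega⟩
    have hf := lev_not_cond r τ β m (by omega)
    unfold LevCond at hf
    push Not at hf
    obtain ⟨z, hz, hzm, hzw, hzr⟩ := hf
    rcases lt_trichotomy z c with h | h | h
    · have := hrr (τ z c) (τ c β)
      rw [hadd z c β h h1 le_rfl] at this
      omega
    · subst h; omega
    · have := h3 z h hz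
      omega

open Classical in
/-- the split -/
noncomputable def spl (r ρ : S → ℕ) (τ : P → P → S) (β : P) : ℕ :=
  if h : ∃ c, IsBase r τ β c then ρ (τ h.choose β) else 0

theorem spl_eq (r ρ : S → ℕ) (τ : P → P → S) (β c : P) (h : IsBase r τ β c) :
    spl r ρ τ β = ρ (τ c β) := by
  have h' : ∃ c, IsBase r τ β c := ⟨c, h⟩
  unfold spl
  rw [dif_pos h', h'.choose_spec.unique h]

/-- extension of a labelling by an initial point -/
noncomputable def addBot (e : S) [Mul S] (σ : Ordinal → Ordinal → S) :
    WithBot Ordinal → WithBot Ordinal → S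
  | ⊥, ⊥ => e
  | ⊥, (y : Ordinal) => open Classical in if y = 0 then e else e * σ 0 y
  | (_ : Ordinal), ⊥ => e
  | (x : Ordinal), (y : Ordinal) => σ x y

end helpers

theorem ext_add {S : Type} [Semigroup S] (e : S) (α : Ordinal) (σ : Ordinal → Ordinal → S)
    (hσ : AdditiveOn α σ) (x y z : WithBot Ordinal) (hxy : x < y) (hyz : y < z)
    (hz : z < α) : addBot e σ x y * addBot e σ y z = addBot e σ x z := by
  induction z using WithBot.recBotCoe with
  | bot => simp at hyz
  | coe z =>
  induction y using WithBot.recBotCoe with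
  | bot => simp at hxy
  | coe y =>
  have hyz := WithBot.coe_lt_coe.1 hyz
  have hz := WithBot.coe_lt_coe.1 hz
  induction x using WithBot.recBotCoe with
  | bot =>
    have hz0 : z ≠ 0 := (bot_le.trans_lt hyz).ne'
    by_cases hy : y = 0
    · subst hy; simp [addBot, hz0]
    · simp only [addBot, hy, hz0, if_false]
      rw [mul_assoc, hσ 0 y z (pos_iff_ne_zero.2 hy) hyz hz]
  | coe x => exact hσ x y z (WithBot.coe_lt_coe.1 hxy) hyz hz

theorem ext_congr {S : Type} [Semigroup S] (e : S) (β : Ordinal) (σ σ' : Ordinal → Ordinal → S)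
    (h : ∀ x y : Ordinal, x < y → y ≤ β → σ x y = σ' x y) (x y : WithBot Ordinal)
    (hxy : x < y) (hy : y ≤ β) : addBot e σ x y = addBot e σ' x y := by
  induction y using WithBot.recBotCoe with
  | bot => simp at hxy
  | coe y =>
  have hy := WithBot.coe_le_coe.1 hy
  induction x using WithBot.recBotCoe with
  | bot =>
    by_cases hy0 : y = 0
    · subst hy0; simp [addBot]
    · simp only [addBot, hy0, if_false]
      rw [h 0 y (pos_iff_ne_zero.2 hy0) hy]
  | coe x => exact h x y (WithBot.coe_lt_coe.1 hxy) hy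

theorem deterministic_forward_ramseyan_split {S : Type} [Semigroup S] [Fintype S] :
    ∃ F : Ordinal → (Ordinal → Ordinal → S) → Ordinal → ℕ,
      (∀ (α : Ordinal) (σ : Ordinal → Ordinal → S), AdditiveOn α σ →
        (∀ β, β < α → 1 ≤ F α σ β ∧ F α σ β ≤ Fintype.card S) ∧
        ForwardRamseyan α σ (F α σ)) ∧
      (∀ (α α' : Ordinal) (σ σ' : Ordinal → Ordinal → S) (β : Ordinal),
        β < α → β < α' →
        AdditiveOn α σ → AdditiveOn α' σ' →
        (∀ x y : Ordinal, x < y → y ≤ β → σ x y = σ' x y) →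
        F α σ β = F α' σ' β) := by
  obtain hS | ⟨⟨e⟩⟩ := isEmpty_or_nonempty S
  · exact ⟨fun _ _ _ => 0, fun _ σ => (hS.false (σ 0 0)).elim,
      fun _ _ σ => (hS.false (σ 0 0)).elim⟩
  obtain ⟨ρ, hinj, hρ, hmono⟩ := exists_numbering S lrank
  have hbase : ∀ (α : Ordinal) (σ : Ordinal → Ordinal → S), AdditiveOn α σ →
      ∀ β : Ordinal, β < α → ∃ c, IsBase lrank (addBot e σ) (β : WithBot Ordinal) c ∧
        spl lrank ρ (addBot e σ) (β : WithBot Ordinal) = ρ (addBot e σ c β) ∧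
        lrank (addBot e σ c β) = lev lrank (addBot e σ) (β : WithBot Ordinal) := by
    intro α σ hσ β hβ
    have hadd : ∀ x y z, x < y → y < z → z ≤ (β : WithBot Ordinal) →
        addBot e σ x y * addBot e σ y z = addBot e σ x z := fun x y z h1 h2 h3 =>
      ext_add e α σ hσ x y z h1 h2 (h3.trans_lt (WithBot.coe_lt_coe.2 hβ))
    obtain ⟨c, hc⟩ := exists_base lrank _ lrank_le lrank_pos lrank_mul_left (addBot e σ) ⊥
      (β : WithBot Ordinal) (WithBot.bot_lt_coe β) hadd
    exact ⟨c, hc, spl_eq _ _ _ _ _ hc, base_rank lrank _ lrank_le lrank_mul_right _ _ _ hadd hc⟩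
  refine ⟨fun _ σ β => spl lrank ρ (addBot e σ) (β : WithBot Ordinal), ?_, ?_⟩
  · intro α σ hσ
    refine ⟨?_, ?_⟩
    · intro β hβ
      obtain ⟨c, -, hs, -⟩ := hbase α σ hσ β hβ
      simp only [hs]
      exact hρ _
    · -- neighbours share base and label
      have key : ∀ k (x y : Ordinal), x < y →
          KNeighboursOn α (fun β => spl lrank ρ (addBot e σ) (β : WithBot Ordinal)) k x y →
          ∃ c a, IsBase lrank (addBot e σ) (x : WithBot Ordinal) c ∧ ρ a = k ∧
            a * σ x y = a ∧ lrank (σ x y) ≤ lrank a := by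
        rintro k x y hxy ⟨hx, hy, hsx, hsy, hall⟩
        simp only at hsx hsy hall
        rw [min_eq_left hxy.le, max_eq_right hxy.le] at hall
        obtain ⟨c, hc, hs, hr⟩ := hbase α σ hσ x hx
        obtain ⟨d, hd, hs', hr'⟩ := hbase α σ hσ y hy
        have hlab : addBot e σ c x = addBot e σ d y := hinj (by rw [← hs, ← hs', hsx, hsy])
        have hlev : lev lrank (addBot e σ) (x : WithBot Ordinal)
            = lev lrank (addBot e σ) (y : WithBot Ordinal) := by rw [← hr, ← hr', hlab]
        have hge : ∀ w : WithBot Ordinal, x ≤ w → w ≤ y →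
            lev lrank (addBot e σ) (y : WithBot Ordinal) ≤ lev lrank (addBot e σ) w := by
          intro w h1 h2
          induction w using WithBot.recBotCoe with
          | bot => simp at h1
          | coe w =>
            have h1 := WithBot.coe_le_coe.1 h1
            have h2 := WithBot.coe_le_coe.1 h2
            obtain ⟨f, -, hsf, hrf⟩ := hbase α σ hσ w (h2.trans_lt hy)
            rw [← hr', ← hrf]
            apply hmono
            rw [← hsf, ← hs', hsy]
            exact hall w h1 h2
        have hxy' : (x : WithBot Ordinal) < y := WithBot.coe_lt_coe.2 hxy
        have hdx : d < x := by
          by_contra h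
          have := hge d (not_lt.1 h) hd.1.le
          have := hd.2.1
          omega
        have hcd : c = d := hc.unique ⟨hdx, by rw [hlev]; exact hd.2.1,
          fun w h1 h2 => by rw [hlev]; exact hd.2.2 w h1 (h2.trans hxy')⟩
        subst hcd
        refine ⟨c, addBot e σ c x, hc, by rw [← hs, hsx], ?_, ?_⟩
        · have := ext_add e α σ hσ c x y hdx hxy' (WithBot.coe_lt_coe.2 hy)
          rw [← hlab] at this
          exact this
        · have := lev_cond lrank _ lrank_le (addBot e σ) (y : WithBot Ordinal) x hxy' hlev.le
            (fun w h1 h2 => hge w h2.le h1.le)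
          rw [hr, hlev]
          exact this
      intro k x y x' y' hxy hxy' hN
      obtain ⟨c, a, -, ha, h1, h2⟩ := key k x y hxy (hN x (by simp) y (by simp))
      obtain ⟨c', a', -, ha', h1', -⟩ := key k x' y' hxy' (hN x' (by simp) y' (by simp))
      have : a = a' := hinj (by rw [ha, ha'])
      subst this
      exact absorb h1 h1' h2
  · intro α α' σ σ' β hβ hβ' hσ hσ' h
    obtain ⟨c, hc, hs, -⟩ := hbase α σ hσ β hβ
    have hext := ext_congr e β σ σ' h
    have hlev := lev_congr lrank (addBot e σ) (addBot e σ') (β : WithBot Ordinal) hext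
    have hc' : IsBase lrank (addBot e σ') (β : WithBot Ordinal) c := by
      refine ⟨hc.1, ?_, ?_⟩
      · rw [← hlev _ hc.1.le, ← hlev _ le_rfl]; exact hc.2.1
      · intro w h1 h2
        rw [← hlev _ h2.le, ← hlev _ le_rfl]; exact hc.2.2 w h1 h2
    simp only [hs, spl_eq _ _ _ _ _ hc', hext c β hc.1 le_rfl]
end
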